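/- arXiv:1607.04768 — 3 statements merged into one kernel-verified Lean document; each statement's English description precedes it below -/
import Mathlib

section
/- Let G be a finite cubic graph (every vertex has degree exactly 3). Suppose the vertex set of G can be partitioned into the vertex set of a subtree T of G and the vertex sets of finitely many cycles of G, such that there is no edge of G joining a vertex of one cycle of the partition to a vertex of a cycle of the partition (including no chords within a cycle and no edges between two distinct cycles), and such that every pendant vertex of T (vertex of degree one in T) is adjacent in G to at least one vertex lying on a cycle of the partition. Then the edge set of G can be decomposed into a spanning tree of G, a matching, and a family of vertex-disjoint cycles. -/
/-!
Let the spanning tree consist of `T` and all edges of `G` leaving `T`, the matching of the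
remaining edges between vertices of `T`, and the last part of the edges avoiding `T`, which are
exactly the edges of the cycles. A vertex of a cycle spends two of its three edges on the cycle,
and its third neighbour must lie in `T`; so the first part is `T` with leaves attached and is
again a tree. If `T` is a single vertex, there are no matching edges. Otherwise the hypothesis on
pendant vertices gives every vertex of `T` at least two neighbours in the larger tree, which leaves
at most one of its three edges for the matching.
-/

section

open SimpleGraph

variable {V : Type*} {G : SimpleGraph V}

section Neighbors

variable {H K : SimpleGraph V} {v : V}

theorem ncard_neighborSet_eq_degree [Fintype (G.neighborSet v)] :
    (G.neighborSet v).ncard = G.degree v := by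
  rw [← Nat.card_coe_set_eq, Nat.card_eq_fintype_card, card_neighborSet_eq_degree]

theorem ncard_neighborSet_sdiff_toSubgraph_add_two_of_isCycle [Fintype (G.neighborSet v)] {u : V}
    {c : G.Walk u u} (hc : c.IsCycle) (hv : v ∈ c.support) :
    (G.neighborSet v \ c.toSubgraph.neighborSet v).ncard + 2 = G.degree v := by
  rw [← hc.ncard_neighborSet_toSubgraph_eq_two hv, ← ncard_neighborSet_eq_degree]
  exact Set.ncard_sdiff_add_ncard_of_subset (c.toSubgraph.neighborSet_subset v)

theorem notMem_support_of_isCycle_of_subsingleton_neighborSet {u : V} {c : G.Walk u u}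
    (hc : c.IsCycle) (hv : (G.neighborSet v).Subsingleton) : v ∉ c.support := by
  intro hmem
  have htwo := hc.ncard_neighborSet_toSubgraph_eq_two hmem
  have hnontriv : (c.toSubgraph.neighborSet v).Nontrivial :=
    (Set.one_lt_ncard_iff_nontrivial_and_finite.1 (by omega)).1
  exact hnontriv.not_subsingleton (hv.anti (c.toSubgraph.neighborSet_subset v))

theorem subsingleton_neighborSet_of_disjoint_of_nontrivial_neighborSet [Fintype (G.neighborSet v)]
    (hdeg : G.degree v ≤ 3) (hH : H ≤ G) (hK : K ≤ G) (hHK : Disjoint H K)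
    (hv : (H.neighborSet v).Nontrivial) : (K.neighborSet v).Subsingleton := by
  by_contra hKv
  have hfin : (G.neighborSet v).Finite := Set.toFinite _
  have hsubH : H.neighborSet v ⊆ G.neighborSet v := fun _ h => hH h
  have hsubK : K.neighborSet v ⊆ G.neighborSet v := fun _ h => hK h
  have hdisj : Disjoint (H.neighborSet v) (K.neighborSet v) :=
    Set.disjoint_left.2 fun _ h h' => disjoint_left.1 hHK _ _ h h'
  have htwoH : 1 < (H.neighborSet v).ncard :=
    Set.one_lt_ncard_iff_nontrivial_and_finite.2 ⟨hv, hfin.subset hsubH⟩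
  have htwoK : 1 < (K.neighborSet v).ncard :=
    Set.one_lt_ncard_iff_nontrivial_and_finite.2
      ⟨Set.not_subsingleton_iff.1 hKv, hfin.subset hsubK⟩
  have hunion := Set.ncard_union_eq hdisj (hfin.subset hsubH) (hfin.subset hsubK)
  have hle := Set.ncard_le_ncard (Set.union_subset hsubH hsubK) hfin
  rw [ncard_neighborSet_eq_degree] at hle
  omega

theorem pairwise_edgeSet_of_subsingleton_neighborSet
    (hG : ∀ v, (G.neighborSet v).Subsingleton) :
    G.edgeSet.Pairwise fun e f => ∀ v, v ∈ e → v ∉ f := by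
  rintro e he f hf hef v ⟨a, rfl⟩ ⟨b, rfl⟩
  exact hef (congrArg (s(v, ·)) (hG v he hf))

end Neighbors

section AttachedLeaves

variable {S : Set V}

theorem isAcyclic_of_isAcyclic_induce (hS : (G.induce S).IsAcyclic)
    (hleaf : ∀ v ∉ S, (G.neighborSet v).Subsingleton) : G.IsAcyclic := by
  intro u c hc
  have hsupp : ∀ v ∈ c.support, v ∈ S := fun v hv => by
    by_contra hvS
    exact notMem_support_of_isCycle_of_subsingleton_neighborSet hc (hleaf v hvS) hv
  refine hS (c.induce S hsupp) ?_
  rw [← Walk.isCycle_map_iff_of_injective (f := (Embedding.induce S).toHom)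
    Subtype.val_injective, Walk.map_induce]
  exact hc

theorem connected_of_connected_induce (hS : (G.induce S).Connected)
    (hreach : ∀ v ∉ S, ∃ u ∈ S, G.Reachable v u) : G.Connected := by
  have hto : ∀ v, ∃ u ∈ S, G.Reachable v u := fun v =>
    (em (v ∈ S)).elim (fun hv => ⟨v, hv, .refl v⟩) (hreach v)
  obtain ⟨r⟩ := hS.nonempty
  have : Nonempty V := ⟨r⟩
  refine ⟨fun a b => ?_⟩
  obtain ⟨a', ha', haa'⟩ := hto a
  obtain ⟨b', hb', hbb'⟩ := hto b
  have hab' : G.Reachable a' b' :=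
    (hS.preconnected ⟨a', ha'⟩ ⟨b', hb'⟩).map (Embedding.induce S).toHom
  exact haa'.trans (hab'.trans hbb'.symm)

theorem isTree_of_isTree_induce (hS : (G.induce S).IsTree)
    (hleaf : ∀ v ∉ S, ∃ u ∈ S, G.neighborSet v = {u}) : G.IsTree where
  connected := connected_of_connected_induce hS.connected fun v hv => by
    obtain ⟨u, hu, hvu⟩ := hleaf v hv
    have hadj : G.Adj v u := hvu.ge rfl
    exact ⟨u, hu, hadj.reachable⟩
  isAcyclic := isAcyclic_of_isAcyclic_induce hS.isAcyclic fun v hv => by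
    obtain ⟨u, -, hvu⟩ := hleaf v hv
    exact hvu ▸ Set.subsingleton_singleton

end AttachedLeaves

section SubgraphDecomposition

variable (T : G.Subgraph)

/-- The subgraph `T` together with all edges of `G` having exactly one end in `T`, as a graph on
all of `V`. It plays the role of the spanning tree. -/
def leafExtension : SimpleGraph V :=
  T.spanningCoe ⊔ G.between T.verts T.vertsᶜ

/-- The chords of `T`: the edges of `G` outside `T` with both ends in `T`. They form the
matching. -/
def chordGraph : SimpleGraph V :=
  (G.induce T.verts).spanningCoe \ T.spanningCoe

/-- The part of `G` outside `T`: the edges with no end in `T`. It is the union of the cycles. -/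
def outerGraph : SimpleGraph V :=
  (G.induce T.vertsᶜ).spanningCoe

variable {T} {a b v : V}

theorem leafExtension_adj : (leafExtension T).Adj a b ↔
    T.Adj a b ∨ G.Adj a b ∧ (a ∈ T.verts ∧ b ∉ T.verts ∨ a ∉ T.verts ∧ b ∈ T.verts) :=
  Iff.rfl

theorem chordGraph_adj : (chordGraph T).Adj a b ↔
    (G.Adj a b ∧ a ∈ T.verts ∧ b ∈ T.verts) ∧ ¬ T.Adj a b := by
  simp [chordGraph]

theorem outerGraph_adj :
    (outerGraph T).Adj a b ↔ G.Adj a b ∧ a ∉ T.verts ∧ b ∉ T.verts := by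
  simp [outerGraph]

theorem leafExtension_sup_chordGraph_sup_outerGraph :
    leafExtension T ⊔ chordGraph T ⊔ outerGraph T = G := by
  ext a b
  have hG : T.Adj a b → G.Adj a b := T.adj_sub
  simp only [sup_adj, leafExtension_adj, chordGraph_adj, outerGraph_adj]
  tauto

theorem disjoint_leafExtension_chordGraph : Disjoint (leafExtension T) (chordGraph T) := by
  refine disjoint_left.2 fun a b => ?_
  rw [leafExtension_adj, chordGraph_adj]
  tauto

theorem disjoint_leafExtension_outerGraph : Disjoint (leafExtension T) (outerGraph T) := by
  refine disjoint_left.2 fun a b => ?_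
  have hT : T.Adj a b → a ∈ T.verts := fun h => h.fst_mem
  rw [leafExtension_adj, outerGraph_adj]
  tauto

theorem disjoint_chordGraph_outerGraph : Disjoint (chordGraph T) (outerGraph T) := by
  refine disjoint_left.2 fun a b => ?_
  rw [chordGraph_adj, outerGraph_adj]
  tauto

theorem leafExtension_le : leafExtension T ≤ G :=
  sup_le T.spanningCoe_le between_le

theorem chordGraph_le : chordGraph T ≤ G :=
  sdiff_le.trans (spanningCoe_induce_le G T.verts)

theorem induce_leafExtension : (leafExtension T).induce T.verts = T.coe := by
  ext a b
  simp [leafExtension_adj]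

theorem neighborSet_leafExtension_of_notMem (hv : v ∉ T.verts) :
    (leafExtension T).neighborSet v = G.neighborSet v ∩ T.verts := by
  ext u
  have hT : T.Adj v u → v ∈ T.verts := fun h => h.fst_mem
  simp only [mem_neighborSet, leafExtension_adj, Set.mem_inter_iff]
  tauto

theorem nontrivial_neighborSet_leafExtension (hT : T.Preconnected) (hnontriv : T.verts.Nontrivial)
    (hv : v ∈ T.verts) (hpendant : (∃! u, T.Adj v u) → ∃ a ∉ T.verts, G.Adj v a) :
    ((leafExtension T).neighborSet v).Nontrivial := by
  have := hnontriv.coe_sort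
  obtain ⟨u, hu⟩ := hT.exists_adj_of_nontrivial ⟨v, hv⟩
  by_cases hunique : ∃ u', T.Adj v u' ∧ u' ≠ u
  · obtain ⟨u', hu', hne⟩ := hunique
    exact ⟨u', .inl hu', u, .inl hu, hne⟩
  · push Not at hunique
    obtain ⟨a, ha, hva⟩ := hpendant ⟨u, hu, hunique⟩
    exact ⟨u, .inl hu, a, .inr ⟨hva, .inl ⟨hv, ha⟩⟩, ne_of_mem_of_not_mem hu.snd_mem ha⟩

theorem subsingleton_neighborSet_chordGraph [G.LocallyFinite] (hT : T.Preconnected)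
    (hdeg : ∀ v ∈ T.verts, G.degree v ≤ 3)
    (hpendant : ∀ v ∈ T.verts, (∃! u, T.Adj v u) → ∃ a ∉ T.verts, G.Adj v a) (v : V) :
    ((chordGraph T).neighborSet v).Subsingleton := by
  intro a ha b hb
  obtain ⟨⟨hva, hv, haT⟩, -⟩ := chordGraph_adj.1 ha
  have hnontriv : T.verts.Nontrivial := ⟨v, hv, a, haT, hva.ne⟩
  exact subsingleton_neighborSet_of_disjoint_of_nontrivial_neighborSet (hdeg v hv)
    leafExtension_le chordGraph_le disjoint_leafExtension_chordGraph
    (nontrivial_neighborSet_leafExtension hT hnontriv hv (hpendant v hv)) ha hb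

end SubgraphDecomposition

section CycleFamily

variable {T : G.Subgraph} {ι : Type*} {x : ι → V} {w : ∀ i, G.Walk (x i) (x i)}

theorem edgeSet_outerGraph_eq_iUnion_edges
    (hout : ∀ v, v ∉ T.verts ↔ ∃ i, v ∈ (w i).support)
    (hnoedge : ∀ i j, ∀ a ∈ (w i).support, ∀ b ∈ (w j).support,
      G.Adj a b → s(a, b) ∈ (w i).edges) :
    (outerGraph T).edgeSet = ⋃ i, {e | e ∈ (w i).edges} := by
  ext e
  induction e with | _ a b
  simp only [mem_edgeSet, outerGraph_adj, hout, Set.mem_iUnion, Set.mem_ofPred_eq]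
  constructor
  · rintro ⟨hab, ⟨i, hi⟩, j, hj⟩
    exact ⟨i, hnoedge i j a hi b hj hab⟩
  · rintro ⟨i, hi⟩
    exact ⟨(w i).adj_of_mem_edges hi, ⟨i, (w i).fst_mem_support_of_mem_edges hi⟩,
      i, (w i).snd_mem_support_of_mem_edges hi⟩

theorem neighborSet_inter_verts_eq_sdiff_toSubgraph
    (hout : ∀ v, v ∉ T.verts ↔ ∃ i, v ∈ (w i).support)
    (hnoedge : ∀ i j, ∀ a ∈ (w i).support, ∀ b ∈ (w j).support,
      G.Adj a b → s(a, b) ∈ (w i).edges)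
    {i : ι} {v : V} (hv : v ∈ (w i).support) :
    G.neighborSet v ∩ T.verts = G.neighborSet v \ (w i).toSubgraph.neighborSet v := by
  ext u
  simp only [Set.mem_inter_iff, Set.mem_sdiff, mem_neighborSet, Subgraph.mem_neighborSet,
    Walk.adj_toSubgraph_iff_mem_edges]
  refine and_congr_right fun hvu => ⟨fun hu he => ?_, fun he => ?_⟩
  · exact (hout u).2 ⟨i, (w i).snd_mem_support_of_mem_edges he⟩ hu
  · by_contra hu
    obtain ⟨j, hj⟩ := (hout u).1 hu
    exact he (hnoedge i j v hv u hj hvu)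

theorem isTree_leafExtension [G.LocallyFinite] (hT : T.coe.IsTree) (hcyc : ∀ i, (w i).IsCycle)
    (hout : ∀ v, v ∉ T.verts ↔ ∃ i, v ∈ (w i).support)
    (hnoedge : ∀ i j, ∀ a ∈ (w i).support, ∀ b ∈ (w j).support,
      G.Adj a b → s(a, b) ∈ (w i).edges)
    (hdeg : ∀ v ∉ T.verts, G.degree v = 3) : (leafExtension T).IsTree := by
  refine isTree_of_isTree_induce (S := T.verts) (by rwa [induce_leafExtension]) fun v hv => ?_
  obtain ⟨i, hi⟩ := (hout v).1 hv
  have hone : (G.neighborSet v ∩ T.verts).ncard = 1 := by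
    have hcount := ncard_neighborSet_sdiff_toSubgraph_add_two_of_isCycle (hcyc i) hi
    rw [← neighborSet_inter_verts_eq_sdiff_toSubgraph hout hnoedge hi, hdeg v hv] at hcount
    omega
  obtain ⟨u, hu⟩ := Set.ncard_eq_one.1 hone
  exact ⟨u, (hu.ge rfl).2, (neighborSet_leafExtension_of_notMem hv).trans hu⟩

theorem cubic_partition_tree_cycles_decomposition_general [G.LocallyFinite] (hT : T.coe.IsTree)
    (hcyc : ∀ i, (w i).IsCycle) (hout : ∀ v, v ∉ T.verts ↔ ∃ i, v ∈ (w i).support)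
    (hdegT : ∀ v ∈ T.verts, G.degree v ≤ 3) (hdegC : ∀ v ∉ T.verts, G.degree v = 3)
    (hnoedge : ∀ i j, ∀ a ∈ (w i).support, ∀ b ∈ (w j).support,
      G.Adj a b → s(a, b) ∈ (w i).edges)
    (hpendant : ∀ v ∈ T.verts, (∃! u, T.Adj v u) → ∃ a ∉ T.verts, G.Adj v a) :
    ∃ Ts M C : Set (Sym2 V), Ts ∪ M ∪ C = G.edgeSet ∧
      Disjoint Ts M ∧ Disjoint Ts C ∧ Disjoint M C ∧
      (fromEdgeSet Ts).IsTree ∧ M.Pairwise (fun e f => ∀ v, v ∈ e → v ∉ f) ∧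
      C = ⋃ i, {e | e ∈ (w i).edges} := by
  refine ⟨(leafExtension T).edgeSet, (chordGraph T).edgeSet, (outerGraph T).edgeSet, ?_,
    disjoint_edgeSet.2 disjoint_leafExtension_chordGraph,
    disjoint_edgeSet.2 disjoint_leafExtension_outerGraph,
    disjoint_edgeSet.2 disjoint_chordGraph_outerGraph, ?_, ?_,
    edgeSet_outerGraph_eq_iUnion_edges hout hnoedge⟩
  · rw [← edgeSet_sup, ← edgeSet_sup, leafExtension_sup_chordGraph_sup_outerGraph]
  · rw [fromEdgeSet_edgeSet]
    exact isTree_leafExtension hT hcyc hout hnoedge hdegC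
  · exact pairwise_edgeSet_of_subsingleton_neighborSet
      (subsingleton_neighborSet_chordGraph ⟨hT.connected.preconnected⟩ hdegT hpendant)

end CycleFamily

end

/-- Lemma 1: let `G` be a finite cubic graph whose vertex set is partitioned
into the vertex set of a subtree `T` of `G` and the vertex sets of finitely
many cycles, such that there is no edge of `G` joining vertices of cycles
other than the cycle edges themselves (no chords, no edges between distinct
cycles), and every pendant vertex of `T` is adjacent in `G` to a vertex of
some cycle.  Then `E(G)` decomposes into a spanning tree, a matching and a
family of vertex-disjoint cycles. -/
theorem cubic_partition_tree_cycles_decomposition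
    {V : Type*} [Fintype V] [DecidableEq V] (G : SimpleGraph V) [DecidableRel G.Adj]
    (hcubic : ∀ v : V, G.degree v = 3)
    -- `T` is a subtree of `G`
    (T : G.Subgraph) (hT : T.coe.IsTree)
    -- a finite family of cycles of `G`
    {ι : Type} [Fintype ι] (x : ι → V) (w : ∀ i : ι, G.Walk (x i) (x i))
    (hcyc : ∀ i, (w i).IsCycle)
    -- the vertex sets of `T` and of the cycles partition `V(G)`
    (hcover : ∀ v : V, v ∈ T.verts ∨ ∃ i, v ∈ (w i).support)
    (hTdisj : ∀ i, ∀ v ∈ (w i).support, v ∉ T.verts)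
    (hcycdisj : Pairwise fun i j => ∀ v : V, v ∈ (w i).support → v ∉ (w j).support)
    -- no edge of `G` between vertices of cycles except the cycle edges
    -- (so no chords within a cycle and no edges between two cycles)
    (hnoedge : ∀ i j : ι, ∀ a b : V, a ∈ (w i).support → b ∈ (w j).support →
      G.Adj a b → i = j ∧ s(a, b) ∈ (w i).edges)
    -- every pendant vertex of `T` is adjacent in `G` to a vertex of a cycle
    (hpendant : ∀ v ∈ T.verts, (∃! u : V, T.Adj v u) →
      ∃ i, ∃ a ∈ (w i).support, G.Adj v a) :
    ∃ (Ts M C : Set (Sym2 V)),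
      -- the three parts partition the edge set of `G`
      Ts ∪ M ∪ C = G.edgeSet ∧
      Disjoint Ts M ∧ Disjoint Ts C ∧ Disjoint M C ∧
      -- `Ts` is the edge set of a spanning tree of `G`
      (SimpleGraph.fromEdgeSet Ts).IsTree ∧
      -- `M` is a matching: distinct edges of `M` share no vertex
      M.Pairwise (fun e f => ∀ v : V, v ∈ e → v ∉ f) ∧
      -- `C` is the edge set of a family of vertex-disjoint cycles of `G`
      (∃ (κ : Type) (_ : Fintype κ) (y : κ → V)
          (c : ∀ k : κ, G.Walk (y k) (y k)),
        (∀ k, (c k).IsCycle) ∧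
        (Pairwise fun k l => ∀ v : V, v ∈ (c k).support → v ∉ (c l).support) ∧
        C = ⋃ k, {e : Sym2 V | e ∈ (c k).edges}) := by
  obtain ⟨Ts, M, C, hunion, hTM, hTC, hMC, htree, hmatching, hC⟩ :=
    cubic_partition_tree_cycles_decomposition_general hT hcyc
      (fun v => ⟨(hcover v).resolve_left, fun ⟨i, hi⟩ => hTdisj i v hi⟩)
      (fun v _ => (hcubic v).le) (fun v _ => hcubic v)
      (fun i j a ha b hb hab => (hnoedge i j a b ha hb hab).2)
      (fun v hv hunique =>
        let ⟨i, a, ha, hva⟩ := hpendant v hv hunique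
        ⟨a, hTdisj i a ha, hva⟩)
  exact ⟨Ts, M, C, hunion, hTM, hTC, hMC, htree, hmatching,
    ι, inferInstance, x, w, hcyc, hcycdisj, hC⟩
end

section
/- Let G be a finite simple graph, let Q be a path in G, and let C be a cycle of G formed by Q, i.e., |E(C) \ E(Q)| = 1 (so every vertex of C lies on Q). Then there exists a chordless cycle C' of G formed by Q, i.e., a cycle C' with |E(C') \ E(Q)| = 1 such that no edge of G outside E(C') joins two vertices of C'. -/
/-!
A chord `e` of a cycle `C` splits `C` into two shorter cycles which meet in `e` and together cover
`C`. If exactly one edge of `C` lies outside a set `S` of edges, then the same holds for one of the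
two parts: when `e ∈ S`, for the part that contains the edge of `C` outside `S`, and when `e ∉ S`,
for the other part, in which `e` takes over that role. Hence a shortest cycle with exactly one edge
outside `S` is chordless.
-/

section

open SimpleGraph Walk

variable {V : Type*} {G : SimpleGraph V} {x y : V}

/-- A closed walk `C` is a cycle formed by the edge set `S` if it is a cycle with exactly one edge
outside `S`. The cycles formed by a path `Q` are the case `S = Q.edgeSet`. -/
def IsCycleFormedBy (C : G.Walk x x) (S : Set (Sym2 V)) : Prop :=
  C.IsCycle ∧ (C.edgeSet \ S).ncard = 1

theorem ncard_edgeSet_diff_eq_countP {w : G.Walk x y} (hw : w.IsTrail) (S : Set (Sym2 V))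
    [DecidablePred (· ∈ S)] : (w.edgeSet \ S).ncard = w.edges.countP (· ∉ S) := by
  classical
  have coe_filter : w.edgeSet \ S = ((w.edges.filter (· ∉ S)).toFinset : Set (Sym2 V)) := by
    ext e
    simp
  rw [coe_filter, Set.ncard_coe_finset, List.toFinset_card_of_nodup (hw.edges_nodup.filter _),
    List.countP_eq_length_filter]

theorem ncard_edgeSet_diff_edgeSet [DecidableEq V] {a b : V} (p : G.Walk x y) (q : G.Walk a b) :
    (p.edgeSet \ q.edgeSet).ncard = (p.edges.toFinset \ q.edges.toFinset).card := by
  rw [← Set.ncard_coe_finset, Finset.coe_sdiff, coe_edges_toFinset, coe_edges_toFinset]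

theorem exists_isPath_isPath_of_mem_support {C : G.Walk x x} (hC : C.IsCycle) {a b : V}
    (ha : a ∈ C.support) (hb : b ∈ C.support) (hab : a ≠ b) :
    ∃ (p : G.Walk a b) (q : G.Walk b a),
      p.IsPath ∧ q.IsPath ∧ (p.edges ++ q.edges).Perm C.edges := by
  classical
  let D := C.rotate a ha
  have hbD : b ∈ D.support := (C.mem_support_rotate_iff a ha).2 hb
  have hD : ((D.takeUntil b hbD).append (D.dropUntil b hbD)).IsCycle :=
    (D.take_spec hbD).symm ▸ hC.rotate ha
  refine ⟨D.takeUntil b hbD, D.dropUntil b hbD, hD.isPath_of_append_left (not_nil_of_ne hab.symm),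
    hD.isPath_of_append_right (not_nil_of_ne hab), ?_⟩
  rw [← edges_append, take_spec]
  exact (C.rotate_edges a ha).perm

theorem exists_isCycle_isCycle_of_isChord {C : G.Walk x x} (hC : C.IsCycle) {e : Sym2 V}
    (he : C.IsChord e) :
    ∃ (a b : V) (C₁ : G.Walk a a) (C₂ : G.Walk b b), C₁.IsCycle ∧ C₂.IsCycle ∧
      e ∈ C₁.edges ∧ e ∈ C₂.edges ∧ (C₁.edges ++ C₂.edges).Perm (e :: e :: C.edges) := by
  induction e with | _ a b
  obtain ⟨hab, heC, ha, hb⟩ := isChord_sym2Mk.1 he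
  obtain ⟨p, q, hp, hq, hpq⟩ := exists_isPath_isPath_of_mem_support hC ha hb hab.ne
  have hep : s(a, b) ∉ p.edges := fun h ↦ heC (hpq.subset (List.mem_append_left _ h))
  have heq : s(a, b) ∉ q.edges := fun h ↦ heC (hpq.subset (List.mem_append_right _ h))
  refine ⟨b, a, cons hab.symm p, cons hab q, (cons_isCycle_iff p hab.symm).2 ⟨hp, ?_⟩,
    (cons_isCycle_iff q hab).2 ⟨hq, heq⟩, ?_, ?_, ?_⟩
  · rwa [Sym2.eq_swap]
  · simp [Sym2.eq_swap]
  · simp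
  · rw [edges_cons, edges_cons, Sym2.eq_swap]
    exact (List.perm_middle.trans (hpq.cons _)).cons _

theorem IsCycleFormedBy.exists_length_lt_of_isChord {C : G.Walk x x} {S : Set (Sym2 V)}
    (hC : IsCycleFormedBy C S) {e : Sym2 V} (he : C.IsChord e) :
    ∃ (y : V) (C' : G.Walk y y), IsCycleFormedBy C' S ∧ C'.length < C.length := by
  classical
  obtain ⟨a, b, C₁, C₂, hC₁, hC₂, he₁, he₂, hperm⟩ := exists_isCycle_isCycle_of_isChord hC.1 he
  have length_add : C₁.length + C₂.length = C.length + 2 := by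
    simpa using hperm.length_eq
  have three_le₁ := hC₁.three_le_length
  have three_le₂ := hC₂.three_le_length
  suffices (C₁.edgeSet \ S).ncard = 1 ∨ (C₂.edgeSet \ S).ncard = 1 by
    rcases this with h₁ | h₂
    · exact ⟨a, C₁, ⟨hC₁, h₁⟩, by lia⟩
    · exact ⟨b, C₂, ⟨hC₂, h₂⟩, by lia⟩
  have count_C := hC.2
  have count_add := hperm.countP_eq (· ∉ S)
  rw [ncard_edgeSet_diff_eq_countP hC.1.isTrail] at count_C
  rw [ncard_edgeSet_diff_eq_countP hC₁.isTrail, ncard_edgeSet_diff_eq_countP hC₂.isTrail]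
  rw [List.countP_append, List.countP_cons, List.countP_cons, count_C] at count_add
  by_cases heS : e ∈ S
  · have : C₁.edges.countP (· ∉ S) + C₂.edges.countP (· ∉ S) = 1 := by simpa [heS] using count_add
    lia
  · have : C₁.edges.countP (· ∉ S) + C₂.edges.countP (· ∉ S) = 3 := by simpa [heS] using count_add
    have pos₁ : 0 < C₁.edges.countP (· ∉ S) := List.countP_pos_iff.2 ⟨e, he₁, by simpa⟩
    have pos₂ : 0 < C₂.edges.countP (· ∉ S) := List.countP_pos_iff.2 ⟨e, he₂, by simpa⟩
    lia

theorem exists_chordless_cycle_formed_by_path_general {C : G.Walk x x} {S : Set (Sym2 V)}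
    (hC : IsCycleFormedBy C S) :
    ∃ (y : V) (C' : G.Walk y y), IsCycleFormedBy C' S ∧ C'.IsChordless := by
  induction hn : C.length using Nat.strong_induction_on generalizing x with | _ n ih
  by_cases hchord : C.IsChordless
  · exact ⟨x, C, hC, hchord⟩
  · obtain ⟨e, he⟩ : ∃ e, C.IsChord e := by simpa [IsChordless] using hchord
    obtain ⟨y, C', hC', hlt⟩ := hC.exists_length_lt_of_isChord he
    exact ih _ (hn ▸ hlt) hC' rfl

end

/-- If a cycle `C` of a finite simple graph `G` is formed by a path `Q`
(that is, `|E(C) \ E(Q)| = 1`), then there exists a chordless cycle `C'` of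
`G` formed by `Q`, i.e. a cycle `C'` with `|E(C') \ E(Q)| = 1` such that no
edge of `G` outside `E(C')` joins two vertices of `C'`. -/
theorem exists_chordless_cycle_formed_by_path
    {V : Type*} [Fintype V] [DecidableEq V] (G : SimpleGraph V)
    {u v : V} (Q : G.Walk u v) (hQ : Q.IsPath)
    {x : V} (C : G.Walk x x) (hC : C.IsCycle)
    (hformed : (C.edges.toFinset \ Q.edges.toFinset).card = 1) :
    ∃ (y : V) (C' : G.Walk y y),
      C'.IsCycle ∧
      (C'.edges.toFinset \ Q.edges.toFinset).card = 1 ∧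
      -- `C'` is chordless: any edge of `G` joining two vertices of `C'`
      -- is an edge of `C'`
      (∀ a b : V, a ∈ C'.support → b ∈ C'.support → G.Adj a b →
        s(a, b) ∈ C'.edges) := by
  obtain ⟨y, C', ⟨hcycle, hcard⟩, hchordless⟩ := exists_chordless_cycle_formed_by_path_general
    (S := Q.edgeSet) ⟨hC, (ncard_edgeSet_diff_edgeSet C Q).trans hformed⟩
  exact ⟨y, C', hcycle, (ncard_edgeSet_diff_edgeSet C' Q).symm.trans hcard,
    fun a b ha hb hab ↦ hchordless.mem_edges ha hb hab⟩
end

section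
/- Let G be a connected cubic graph (every vertex has degree exactly 3) that is traceable, i.e., G contains a Hamiltonian path. Then the edge set of G can be decomposed into a spanning tree of G, a matching, and a family of vertex-disjoint cycles. (Hoffmann-Ostenhof's conjecture holds for traceable cubic graphs.) -/
/-!
Number the vertices along the Hamiltonian path. The path together with one further edge at each of
its ends is a Hamiltonian cycle, a theta graph or a dumbbell, and the remaining edges are chords
that form a matching. It suffices to find disjoint induced cycles whose complement is connected and
becomes a forest once its chords are deleted: every vertex on the cycles has exactly one edge
leaving them, so these edges extend a spanning tree of the complement to one of the whole graph,
and the edges left over are chords.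

* For a Hamiltonian cycle, remove the cycle through an innermost chord.
* In a theta graph, two of the three segments of the path agree on whether they contain a chord.
  Flipping and reversing the order makes them the two outer segments. Remove a chord cycle inside
  each of them, a cycle through a chord joining them, or, if they span no chord at all, the cycle
  they form.
* In a dumbbell, remove a cycle inside the right part together with a suitable second cycle. This
  fails only if the chords to the left are nested around a vertex from which the path can be
  rerouted, and the rerouted path gives a theta graph or a Hamiltonian cycle.
-/

namespace HoffmannOstenhof

open SimpleGraph

section Splittings

variable {V W : Type*} {G : SimpleGraph V}

/-- A graph is a *matching graph* if no two of its edges share a vertex. -/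
def IsMatchingGraph (M : SimpleGraph V) : Prop :=
  ∀ x, (M.neighborSet x).Subsingleton

/-- The edges of `G` are partitioned into those of a spanning tree `T`, of a matching `M` and of a
disjoint union of cycles `C`; the three parts are encoded as graphs on the vertex set of `G`. -/
structure IsDecomposition (G T M C : SimpleGraph V) : Prop where
  sup_eq : T ⊔ M ⊔ C = G
  disjoint_tree_matching : Disjoint T M
  disjoint_tree_cycles : Disjoint T C
  disjoint_matching_cycles : Disjoint M C
  isTree : T.IsTree
  isMatchingGraph : IsMatchingGraph M
  isCycles : C.IsCycles

/-- Every vertex of `S` has exactly two neighbours in `S`: the finite components of the subgraph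
induced on `S` are cycles. -/
def IsTwoRegularOn (G : SimpleGraph V) (S : Set V) : Prop :=
  ∀ x ∈ S, (G.neighborSet x ∩ S).ncard = 2

/-- A *splitting* of the subgraph of `G` on `U`: the set `S ⊆ U` induces a disjoint union of cycles,
while `U \ S` induces a connected graph that becomes a forest once the matching `M` is deleted. -/
structure IsSplitting (G : SimpleGraph V) (U S : Set V) (M : SimpleGraph V) : Prop where
  subset : S ⊆ U
  isTwoRegularOn : IsTwoRegularOn G S
  connected : (G.induce (U \ S)).Connected
  isMatchingGraph : IsMatchingGraph M
  isAcyclic : ((G \ M).induce (U \ S)).IsAcyclic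

/-- The subgraph of `G` on `U` has a splitting. -/
def HasSplitting (G : SimpleGraph V) (U : Set V) : Prop :=
  ∃ S M, IsSplitting G U S M

lemma IsMatchingGraph.mono {M N : SimpleGraph V} (hM : IsMatchingGraph M) (h : N ≤ M) :
    IsMatchingGraph N :=
  fun x _ hy _ hz => hM x (h hy) (h hz)

lemma IsMatchingGraph.comap {M : SimpleGraph V} (hM : IsMatchingGraph M) (f : W ↪ V) :
    IsMatchingGraph (M.comap f) :=
  fun x _ hy _ hz => f.injective (hM (f x) hy hz)

lemma IsMatchingGraph.pairwise_edgeSet {M : SimpleGraph V} (hM : IsMatchingGraph M) :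
    M.edgeSet.Pairwise fun e f => ∀ v, v ∈ e → v ∉ f := by
  intro e he f hf hne v hve hvf
  obtain ⟨y, rfl⟩ := hve
  obtain ⟨z, rfl⟩ := hvf
  exact hne (congrArg _ (hM v he hf))

lemma IsTwoRegularOn.union {S T : Set V} (hS : IsTwoRegularOn G S) (hT : IsTwoRegularOn G T)
    (hST : ∀ x ∈ S, ∀ y ∈ T, ¬ G.Adj x y) : IsTwoRegularOn G (S ∪ T) := by
  rintro x (hx | hx)
  · have : G.neighborSet x ∩ T = ∅ := Set.eq_empty_of_forall_notMem fun y hy => hST x hx y hy.2 hy.1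
    rw [Set.inter_union_distrib_left, this, Set.union_empty, hS x hx]
  · have : G.neighborSet x ∩ S = ∅ :=
      Set.eq_empty_of_forall_notMem fun y hy => hST y hy.2 x hx hy.1.symm
    rw [Set.inter_union_distrib_left, this, Set.empty_union, hT x hx]

/-- `x` and `y` are joined by a walk of `G` inside the vertex set `s`. -/
def ReachableIn (G : SimpleGraph V) (s : Set V) (x y : V) : Prop :=
  ∃ (hx : x ∈ s) (hy : y ∈ s), (G.induce s).Reachable ⟨x, hx⟩ ⟨y, hy⟩

namespace ReachableIn

variable {s : Set V} {x y z : V}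

lemma refl (hx : x ∈ s) : ReachableIn G s x x :=
  ⟨hx, hx, .rfl⟩

lemma symm (h : ReachableIn G s x y) : ReachableIn G s y x :=
  let ⟨hx, hy, hxy⟩ := h
  ⟨hy, hx, hxy.symm⟩

lemma trans (h : ReachableIn G s x y) (h' : ReachableIn G s y z) : ReachableIn G s x z :=
  let ⟨hx, _, hxy⟩ := h
  let ⟨_, hz, hyz⟩ := h'
  ⟨hx, hz, hxy.trans hyz⟩

lemma of_adj (h : G.Adj x y) (hx : x ∈ s) (hy : y ∈ s) : ReachableIn G s x y :=
  ⟨hx, hy, Adj.reachable (G := G.induce s) h⟩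

lemma connected_induce {r : V} (hr : r ∈ s) (h : ∀ x ∈ s, ReachableIn G s x r) :
    (G.induce s).Connected := by
  rw [connected_iff_exists_forall_reachable]
  exact ⟨⟨r, hr⟩, fun ⟨x, hx⟩ =>
    let ⟨_, _, hxr⟩ := h x hx
    hxr.symm⟩

end ReachableIn

lemma isAcyclic_of_rank {α : Type*} [LinearOrder α] (H : SimpleGraph V) (rank : V → α)
    (h : ∀ x, {y ∈ H.neighborSet x | rank y ≤ rank x}.Subsingleton) : H.IsAcyclic := by
  classical
  intro v c hc
  -- A vertex of maximal rank on a cycle has two distinct neighbours of smaller or equal rank.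
  obtain ⟨x, hx, hmax⟩ := c.support.toFinset.exists_max_image rank ⟨v, by simp⟩
  simp only [List.mem_toFinset] at hx hmax
  have hcx := hc.rotate hx
  have hrank i : rank ((c.rotate x hx).getVert i) ≤ rank x :=
    hmax _ ((c.mem_support_rotate_iff x hx).1 ((c.rotate x hx).getVert_mem_support i))
  exact hcx.snd_ne_penultimate <| h x
    ⟨(c.rotate x hx).adj_snd hcx.not_nil, hrank _⟩
    ⟨((c.rotate x hx).adj_penultimate hcx.not_nil).symm, hrank _⟩

lemma isAcyclic_of_induce_compl {S : Set V} (hacyclic : (G.induce Sᶜ).IsAcyclic)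
    (hleaf : ∀ x ∈ S, (G.neighborSet x).Subsingleton) : G.IsAcyclic := by
  intro v c hc
  have hmem : ∀ x ∈ c.support, x ∈ Sᶜ := by
    intro x hx hxS
    have hsub := (hleaf x hxS).anti (c.toSubgraph.neighborSet_subset x)
    have := hc.ncard_neighborSet_toSubgraph_eq_two hx
    have := hsub.finite.to_subtype
    have := Set.ncard_le_one_iff_subsingleton.2 hsub
    omega
  refine hacyclic (c.induce Sᶜ hmem) ?_
  rw [← Walk.isCycle_map_iff_of_injective (f := (Embedding.induce Sᶜ).toHom)
    Subtype.val_injective]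
  simpa using hc

lemma exists_disjoint_cycles_of_isCycles [Finite V] {C : SimpleGraph V} (hCG : C ≤ G)
    (hC : C.IsCycles) :
    ∃ (ι : Type) (_ : Fintype ι) (x : ι → V) (w : ∀ i : ι, G.Walk (x i) (x i)),
      (∀ i, (w i).IsCycle) ∧
      (Pairwise fun i j => ∀ v : V, v ∈ (w i).support → v ∉ (w j).support) ∧
      C.edgeSet = ⋃ i, {e : Sym2 V | e ∈ (w i).edges} := by
  let I := {c : C.ConnectedComponent // ∃ v ∈ c.supp, (C.neighborSet v).Nonempty}
  obtain ⟨n, ⟨e⟩⟩ := Finite.exists_equiv_fin I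
  choose x hx hne using fun i : Fin n => (e.symm i).2
  choose p hp hverts using fun i : Fin n =>
    hC.exists_cycle_toSubgraph_verts_eq_connectedComponentSupp (hx i) (hne i)
  have mem_support i v : v ∈ (p i).support ↔ v ∈ (e.symm i).1.supp := by
    rw [← hverts i, Walk.mem_verts_toSubgraph]
  refine ⟨Fin n, inferInstance, x, fun i => (p i).mapLe hCG, fun i => (hp i).mapLe hCG, ?_, ?_⟩
  · intro i j hij v hvi hvj
    simp only [Walk.support_mapLe_eq_support, mem_support, ConnectedComponent.mem_supp_iff]
      at hvi hvj
    exact hij (e.symm.injective (Subtype.ext (hvi.symm.trans hvj)))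
  · ext ⟨a, b⟩
    simp only [Set.mem_iUnion, Set.mem_ofPred_eq, Walk.edges_mapLe_eq_edges]
    refine ⟨fun hab => ?_, fun ⟨i, hi⟩ => (p i).edges_subset_edgeSet hi⟩
    let c : I := ⟨C.connectedComponentMk a, a, by simp, b, hab⟩
    have ha : a ∈ (p (e c)).support := by simp [mem_support, c]
    -- In both graphs `a` has exactly two neighbours.
    have hnbrs := Set.eq_of_subset_of_ncard_le ((p (e c)).toSubgraph.neighborSet_subset a)
      (by rw [(hp (e c)).ncard_neighborSet_toSubgraph_eq_two ha, hC ⟨b, hab⟩]) (Set.toFinite _)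
    exact ⟨e c, Walk.adj_toSubgraph_iff_mem_edges.1 (hnbrs.ge hab)⟩

lemma IsTwoRegularOn.exists_neighborSet_diff_eq_singleton {S : Set V} (h : IsTwoRegularOn G S)
    {x : V} (hcubic : (G.neighborSet x).ncard = 3) (hx : x ∈ S) :
    ∃ y, G.neighborSet x \ S = {y} := by
  have hfin : (G.neighborSet x).Finite := Set.finite_of_ncard_ne_zero (by omega)
  have := Set.ncard_inter_add_ncard_sdiff_eq_ncard (G.neighborSet x) S hfin
  have := h x hx
  exact Set.ncard_eq_one.1 (by omega)

lemma IsTwoRegularOn.isCycles_spanningCoe_induce {S : Set V} (h : IsTwoRegularOn G S) :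
    (G.induce S).spanningCoe.IsCycles := by
  rintro x ⟨y, hxy⟩
  obtain ⟨-, hxS, -⟩ : G.Adj x y ∧ x ∈ S ∧ y ∈ S := by simpa using hxy
  rw [← h x hxS]
  congr 1
  ext z
  simp [hxS]

lemma IsSplitting.exists_isDecomposition {S : Set V} {M : SimpleGraph V}
    (h : IsSplitting G Set.univ S M) (hcubic : ∀ x, (G.neighborSet x).ncard = 3) :
    ∃ T N C, IsDecomposition G T N C := by
  let C := (G.induce S).spanningCoe
  have C_adj x y : C.Adj x y ↔ G.Adj x y ∧ x ∈ S ∧ y ∈ S := by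
    simp [C]
  have hCG : C ≤ G := fun x y hxy => ((C_adj x y).1 hxy).1
  have hout {x} (hx : x ∈ S) :=
    h.isTwoRegularOn.exists_neighborSet_diff_eq_singleton (hcubic x) hx
  have hconn : (G \ C).Connected := by
    have hle : G.induce (Set.univ \ S) ≤ (G \ C).comap Subtype.val :=
      fun x y hxy => ⟨hxy, fun hC => x.2.2 ((C_adj _ _).1 hC).2.1⟩
    obtain ⟨r⟩ := h.connected.nonempty
    rw [connected_iff_exists_forall_reachable]
    have hrest x (hx : x ∉ S) : (G \ C).Reachable r x :=
      ((h.connected r ⟨x, trivial, hx⟩).mono hle).map (Hom.comap _ _)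
    refine ⟨r, fun x => ?_⟩
    by_cases hx : x ∈ S
    · obtain ⟨y, hxS⟩ := hout hx
      obtain ⟨hxy, hy⟩ : y ∈ G.neighborSet x \ S := by simp [hxS]
      have : (G \ C).Adj y x := ⟨hxy.symm, fun hC => hy ((C_adj _ _).1 hC).2.1⟩
      exact (hrest y hy).trans this.reachable
    · exact hrest x hx
  have hacyclic : ((G \ C) \ M).IsAcyclic := by
    refine isAcyclic_of_induce_compl (S := S) ?_ fun x hx => ?_
    · rw [Set.compl_eq_univ_sdiff]
      exact h.isAcyclic.anti (comap_monotone _ (sdiff_le_sdiff_right sdiff_le))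
    · obtain ⟨y, hxS⟩ := hout hx
      refine Set.subsingleton_of_subset_singleton (a := y) ?_
      rw [← hxS]
      exact fun z hxz => ⟨hxz.1.1, fun hz => hxz.1.2 ((C_adj x z).2 ⟨hxz.1.1, hx, hz⟩)⟩
  obtain ⟨T, hFT, hTK, hT⟩ := hconn.exists_isTree_le_of_le_of_isAcyclic sdiff_le hacyclic
  exact ⟨T, (G \ C) \ T, C,
    { sup_eq := by rw [sup_sdiff_cancel_right hTK, sdiff_sup_cancel hCG]
      disjoint_tree_matching := disjoint_sdiff_self_right
      disjoint_tree_cycles := disjoint_sdiff_self_left.mono_left hTK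
      disjoint_matching_cycles := disjoint_sdiff_self_left.mono_left sdiff_le
      isTree := hT
      isMatchingGraph := h.isMatchingGraph.mono <| by
        rwa [sdiff_le_iff, sup_comm, ← sdiff_le_iff]
      isCycles := h.isTwoRegularOn.isCycles_spanningCoe_induce }⟩

lemma IsSplitting.comap {Γ : SimpleGraph W} {U S : Set W} {M : SimpleGraph W}
    (h : IsSplitting Γ U S M) (f : G ↪g Γ) (hf : Set.range f = U) :
    IsSplitting G Set.univ (f ⁻¹' S) (M.comap f) := by
  have hfU x : f x ∈ U := hf.subset ⟨x, rfl⟩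
  let restrict (x : ↑(Set.univ \ f ⁻¹' S)) : ↑(U \ S) := ⟨f x, hfU x, x.2.2⟩
  have restrict_bijective : restrict.Bijective := by
    refine ⟨fun x y hxy => Subtype.ext (f.injective (congrArg Subtype.val hxy)), ?_⟩
    rintro ⟨y, hyU, hyS⟩
    obtain ⟨x, rfl⟩ := hf.superset hyU
    exact ⟨⟨x, trivial, hyS⟩, rfl⟩
  refine ⟨Set.subset_univ _, fun x hx => ?_, ?_, h.isMatchingGraph.comap f.toEmbedding, ?_⟩
  · have himage : f '' (G.neighborSet x ∩ f ⁻¹' S) = Γ.neighborSet (f x) ∩ S := by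
      ext y
      constructor
      · rintro ⟨y, ⟨hxy, hy⟩, rfl⟩
        exact ⟨f.map_adj_iff.2 hxy, hy⟩
      · rintro ⟨hxy, hy⟩
        obtain ⟨y, rfl⟩ := hf.superset (h.subset hy)
        exact ⟨y, ⟨f.map_adj_iff.1 hxy, hy⟩, rfl⟩
    rw [← h.isTwoRegularOn (f x) hx, ← himage, Set.ncard_image_of_injective _ f.injective]
  · let e : G.induce (Set.univ \ f ⁻¹' S) ≃g Γ.induce (U \ S) :=
      ⟨Equiv.ofBijective restrict restrict_bijective, f.map_adj_iff⟩
    exact e.connected_iff.2 h.connected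
  · let φ : (G \ M.comap f).induce (Set.univ \ f ⁻¹' S) →g (Γ \ M).induce (U \ S) :=
      ⟨restrict, fun hxy => ⟨f.map_adj_iff.2 hxy.1, hxy.2⟩⟩
    exact h.isAcyclic.comap φ restrict_bijective.injective

lemma HasSplitting.comap {Γ : SimpleGraph W} {U : Set W} (h : HasSplitting Γ U) (f : G ↪g Γ)
    (hf : Set.range f = U) : HasSplitting G Set.univ :=
  let ⟨_, _, hS⟩ := h
  ⟨_, _, hS.comap f hf⟩

lemma HasSplitting.exists_isDecomposition (h : HasSplitting G Set.univ)
    (hcubic : ∀ x, (G.neighborSet x).ncard = 3) : ∃ T M C, IsDecomposition G T M C :=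
  let ⟨_, _, hS⟩ := h
  hS.exists_isDecomposition hcubic

end Splittings

section ChordDiagrams

/-- The *frame* on the vertices `0, …, n - 1`: the path `0, 1, …, n - 1` together with one further
edge at each of its ends, joining `0` to `a` and `n - 1` to `b`. -/
def frame (n a b : ℕ) : SimpleGraph ℕ :=
  fromRel fun i j => i < n ∧ j < n ∧ (i + 1 = j ∨ i = 0 ∧ j = a ∨ i + 1 = n ∧ j = b)

lemma frame_adj {n a b i j : ℕ} : (frame n a b).Adj i j ↔ i ≠ j ∧ i < n ∧ j < n ∧
    (i + 1 = j ∨ j + 1 = i ∨ i = 0 ∧ j = a ∨ i = a ∧ j = 0 ∨ i + 1 = n ∧ j = b ∨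
      i = b ∧ j + 1 = n) := by
  simp only [frame, fromRel_adj]
  omega

/-- A cubic graph on the vertices `0, …, n - 1` that contains the frame. It is encoded by its
remaining edges, the *chords*: `mate i` is the other end of the chord at `i`, and `mate i = i` if
there is no such chord. The diagram is *closed* if the frame is a Hamiltonian cycle, and *open*
otherwise; in the latter case `a` and `b` have three neighbours in the frame. -/
structure ChordDiagram (n a b : ℕ) where
  mate : ℕ → ℕ
  two_le_left : 2 ≤ a
  right_add_three_le : b + 3 ≤ n
  left_ne_right : a ≠ b
  closed_or_open : a + 1 = n ∧ b = 0 ∨ a + 2 ≤ n ∧ 1 ≤ b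
  mate_mate (i : ℕ) : mate (mate i) = i
  mate_of_le (i : ℕ) : n ≤ i → mate i = i
  not_frame_adj_mate (i : ℕ) : ¬ (frame n a b).Adj i (mate i)
  mate_eq_self_iff (i : ℕ) : i < n → (mate i = i ↔ 1 ≤ b ∧ (i = a ∨ i = b))

/-- Exactly two of `p`, `q`, `r` lie in `S`. -/
def ExactlyTwo (S : Set ℕ) (p q r : ℕ) : Prop :=
  p ∈ S ∧ q ∈ S ∧ r ∉ S ∨ p ∈ S ∧ q ∉ S ∧ r ∈ S ∨ p ∉ S ∧ q ∈ S ∧ r ∈ S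

lemma ExactlyTwo.ncard_eq_two {S : Set ℕ} {p q r : ℕ} (h : ExactlyTwo S p q r) (hpq : p ≠ q)
    (hpr : p ≠ r) (hqr : q ≠ r) : {w ∈ S | w = p ∨ w = q ∨ w = r}.ncard = 2 := by
  rw [Set.ncard_eq_two]
  rcases h with ⟨hp, hq, hr⟩ | ⟨hp, hq, hr⟩ | ⟨hp, hq, hr⟩
  · exact ⟨p, q, hpq, by ext w; grind⟩
  · exact ⟨p, r, hpr, by ext w; grind⟩
  · exact ⟨q, r, hqr, by ext w; grind⟩

namespace ChordDiagram

variable {n a b : ℕ} (D : ChordDiagram n a b)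

attribute [grind =] mate_mate

/-- The graph whose edges are the chords of `D`. -/
def chords : SimpleGraph ℕ :=
  fromRel fun i j => D.mate i = j

/-- The cubic graph encoded by `D`. -/
def graph : SimpleGraph ℕ :=
  frame n a b ⊔ D.chords

include D in
lemma left_lt : a < n := by
  have := D.closed_or_open
  omega

lemma mate_lt {i : ℕ} (hi : i < n) : D.mate i < n := by
  by_contra! h
  grind [D.mate_of_le _ h]

lemma chords_adj {i j : ℕ} : D.chords.Adj i j ↔ D.mate i = j ∧ i ≠ j := by
  simp only [chords, fromRel_adj]
  grind

lemma graph_adj {i j : ℕ} : D.graph.Adj i j ↔ (frame n a b).Adj i j ∨ D.mate i = j ∧ i ≠ j := by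
  simp only [graph, sup_adj, chords_adj]

lemma adj_mate {i : ℕ} (h : D.mate i ≠ i) : D.graph.Adj i (D.mate i) :=
  D.graph_adj.2 (.inr ⟨rfl, h.symm⟩)

lemma adj_succ {i : ℕ} (hi : i + 1 < n) : D.graph.Adj i (i + 1) :=
  D.graph_adj.2 (.inl (frame_adj.2 (by omega)))

section Neighbors

variable {D} {w : ℕ}

lemma adj_zero_iff : D.graph.Adj 0 w ↔ w = 1 ∨ w = a ∨ w = D.mate 0 := by
  have := D.closed_or_open
  have := D.right_add_three_le
  have := D.two_le_left
  have := D.mate_lt (i := 0) (by omega)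
  have := D.mate_eq_self_iff 0 (by omega)
  simp only [graph_adj, frame_adj, true_and]
  omega

lemma adj_last_iff : D.graph.Adj (n - 1) w ↔ w = n - 2 ∨ w = b ∨ w = D.mate (n - 1) := by
  have := D.closed_or_open
  have := D.right_add_three_le
  have := D.mate_eq_self_iff (n - 1) (by omega)
  simp only [graph_adj, frame_adj]
  omega

lemma adj_left_iff (hb : 1 ≤ b) : D.graph.Adj a w ↔ w = a - 1 ∨ w = a + 1 ∨ w = 0 := by
  have := D.closed_or_open
  have := D.two_le_left
  have := D.left_ne_right
  have := (D.mate_eq_self_iff a (by omega)).2 ⟨hb, .inl rfl⟩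
  simp only [graph_adj, frame_adj, true_and]
  omega

lemma adj_right_iff (hb : 1 ≤ b) : D.graph.Adj b w ↔ w = b - 1 ∨ w = b + 1 ∨ w = n - 1 := by
  have := D.right_add_three_le
  have := D.left_ne_right
  have := (D.mate_eq_self_iff b (by omega)).2 ⟨hb, .inr rfl⟩
  simp only [graph_adj, frame_adj, true_and]
  omega

lemma adj_inner_iff {x : ℕ} (h0 : 0 < x) (hn : x + 1 < n) (ha : x ≠ a) (hb : x ≠ b) :
    D.graph.Adj x w ↔ w = x - 1 ∨ w = x + 1 ∨ w = D.mate x := by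
  have := D.mate_eq_self_iff x (by omega)
  simp only [graph_adj, frame_adj]
  omega

end Neighbors

lemma mate_ne {x : ℕ} (hx : x < n) (h : b = 0 ∨ x ≠ a ∧ x ≠ b) : D.mate x ≠ x := by
  have := D.mate_eq_self_iff x hx
  omega

lemma isTwoRegularOn {S : Set ℕ} (hS : S ⊆ Set.Iio n)
    (zero : 0 ∈ S → ExactlyTwo S 1 a (D.mate 0))
    (last : n - 1 ∈ S → ExactlyTwo S (n - 2) b (D.mate (n - 1)))
    (left : 1 ≤ b → a ∈ S → ExactlyTwo S (a - 1) (a + 1) 0)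
    (right : 1 ≤ b → b ∈ S → ExactlyTwo S (b - 1) (b + 1) (n - 1))
    (inner : ∀ x ∈ S, 0 < x → x + 1 < n → x ≠ a → x ≠ b →
      ExactlyTwo S (x - 1) (x + 1) (D.mate x)) :
    IsTwoRegularOn D.graph S := by
  have := D.closed_or_open
  have := D.right_add_three_le
  have := D.two_le_left
  have := D.left_ne_right
  have key {x p q r : ℕ} (hadj : ∀ w, D.graph.Adj x w ↔ w = p ∨ w = q ∨ w = r)
      (h : ExactlyTwo S p q r) (hne : p ≠ q ∧ p ≠ r ∧ q ≠ r) :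
      (D.graph.neighborSet x ∩ S).ncard = 2 := by
    rw [← h.ncard_eq_two hne.1 hne.2.1 hne.2.2]
    congr 1
    ext w
    simp [hadj, and_comm]
  intro x hx
  have hxn : x < n := hS hx
  have hmate := D.not_frame_adj_mate x
  have hself := D.mate_eq_self_iff x hxn
  have := D.mate_lt hxn
  rw [frame_adj] at hmate
  rcases eq_or_ne x 0 with rfl | h0
  · exact key (fun w => adj_zero_iff) (zero hx) (by omega)
  rcases eq_or_ne x (n - 1) with rfl | hlast
  · exact key (fun w => adj_last_iff) (last hx) (by omega)
  rcases eq_or_ne x a with rfl | ha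
  · exact key (fun w => adj_left_iff (by omega)) (left (by omega) hx) (by omega)
  rcases eq_or_ne x b with rfl | hb
  · exact key (fun w => adj_right_iff (by omega)) (right (by omega) hx) (by omega)
  · exact key (fun w => adj_inner_iff (by omega) (by omega) ha hb)
      (inner x hx (by omega) (by omega) ha hb) (by omega)

lemma isMatchingGraph_chords : IsMatchingGraph D.chords := by
  intro x y hy z hz
  exact (D.chords_adj.1 hy).1.symm.trans (D.chords_adj.1 hz).1

end ChordDiagram

lemma isAcyclic_induce_frame {n a b s₁ s₂ : ℕ} {S : Set ℕ} (h₁₂ : s₁ < s₂)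
    (hs₂ : s₂ < n) (h₁ : s₁ ∈ S) (h₂ : s₂ ∈ S) (hab : a + 1 = n ∧ b = 0 ∨
      (a ∈ S ∨ s₁ < a ∧ a < s₂) ∧ (b ∈ S ∨ s₁ < b ∧ b < s₂)) :
    ((frame n a b).induce (Set.Iio n \ S)).IsAcyclic := by
  -- Orient the segments below `s₂` upwards, the middle one first, and the last one downwards.
  let rank (k : ℕ) : ℕ := if k < s₁ then n + k else if k < s₂ then k else 3 * n - k
  let parent (k : ℕ) : ℕ :=
    if k < s₁ then if k = 0 then a else k - 1
    else if k < s₂ then k - 1 else if k + 1 = n then b else k + 1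
  refine isAcyclic_of_rank _ (fun x => rank x) ?_
  rintro ⟨i, hi, hiS⟩
  simp only [Set.mem_Iio] at hi
  have key (j : ℕ) (hj : j ∈ Set.Iio n \ S) (hij : (frame n a b).Adj i j)
      (hrank : rank j ≤ rank i) : j = parent i := by
    have hjS := hj.2
    obtain ⟨-, -, hjn, hij⟩ := frame_adj.1 hij
    have hi2 : i ≠ s₂ := by grind
    have hj1 : j ≠ s₁ := by grind
    have hj2 : j ≠ s₂ := by grind
    have hia : i = a → a + 1 = n ∧ b = 0 ∨ s₁ < a ∧ a < s₂ := by grind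
    have hja : j = a → a + 1 = n ∧ b = 0 ∨ s₁ < a ∧ a < s₂ := by grind
    have hib : i = b → a + 1 = n ∧ b = 0 ∨ s₁ < b ∧ b < s₂ := by grind
    have hjb : j = b → a + 1 = n ∧ b = 0 ∨ s₁ < b ∧ b < s₂ := by grind
    simp only [rank, parent] at hrank ⊢
    rcases hij with h | h | h | h | h | h <;> split_ifs at hrank ⊢ <;> omega
  rintro ⟨j, hj⟩ ⟨hij, hji⟩ ⟨k, hk⟩ ⟨hik, hki⟩
  exact Subtype.ext ((key j hj hij hji).trans (key k hk hik hki).symm)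

namespace ChordDiagram

variable {n a b : ℕ} (D : ChordDiagram n a b)

lemma hasSplitting {S : Set ℕ} {s₁ s₂ r : ℕ} (hS : S ⊆ Set.Iio n)
    (htwo : IsTwoRegularOn D.graph S) (h₁₂ : s₁ < s₂) (h₁ : s₁ ∈ S) (h₂ : s₂ ∈ S)
    (hab : a + 1 = n ∧ b = 0 ∨ (a ∈ S ∨ s₁ < a ∧ a < s₂) ∧ (b ∈ S ∨ s₁ < b ∧ b < s₂))
    (hr : r ∈ Set.Iio n \ S)
    (hconn : ∀ x ∈ Set.Iio n \ S, ReachableIn D.graph (Set.Iio n \ S) x r) :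
    HasSplitting D.graph (Set.Iio n) := by
  refine ⟨S, D.chords, hS, htwo, ReachableIn.connected_induce hr hconn, D.isMatchingGraph_chords,
    (isAcyclic_induce_frame h₁₂ (hS h₂) h₁ h₂ hab).anti (comap_monotone _ ?_)⟩
  rw [graph, sdiff_le_iff, sup_comm]

lemma reachableIn_of_segment {S : Set ℕ} {x y : ℕ} (hx : x < n) (hy : y < n)
    (hS : ∀ z, x ≤ z ∧ z ≤ y ∨ y ≤ z ∧ z ≤ x → z ∉ S) :
    ReachableIn D.graph (Set.Iio n \ S) x y := by
  wlog hxy : x ≤ y generalizing x y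
  · exact (this hy hx (fun z hz => hS z hz.symm) (by omega)).symm
  induction y, hxy using Nat.le_induction with
  | base => exact .refl ⟨hx, hS x (by omega)⟩
  | succ y hxy ih =>
    exact (ih (by omega) fun z hz => hS z (by omega)).trans <|
      .of_adj (D.adj_succ hy) ⟨Nat.lt_of_succ_lt hy, hS y (by omega)⟩ ⟨hy, hS (y + 1) (by omega)⟩

lemma reachableIn_zero_left {S : Set ℕ} (h0 : 0 ∉ S) (ha : a ∉ S) :
    ReachableIn D.graph (Set.Iio n \ S) 0 a := by
  have := D.left_lt
  have := D.two_le_left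
  exact .of_adj (D.graph_adj.2 (.inl (frame_adj.2 (by omega)))) ⟨by grind, h0⟩ ⟨D.left_lt, ha⟩

lemma reachableIn_last_right {S : Set ℕ} (hlast : n - 1 ∉ S) (hb : b ∉ S) :
    ReachableIn D.graph (Set.Iio n \ S) (n - 1) b := by
  have := D.right_add_three_le
  exact .of_adj (D.graph_adj.2 (.inl (frame_adj.2 (by omega)))) ⟨by grind, hlast⟩ ⟨by grind, hb⟩

/-- Some chord has both ends in the interval `[p, q)`. -/
def HasChordIn (p q : ℕ) : Prop :=
  ∃ i, p ≤ i ∧ i < D.mate i ∧ D.mate i < q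

/-- `c < d` are the ends of a chord, and no other chord has both ends in `[c, d]`. -/
structure IsInnermostChord (c d : ℕ) : Prop where
  lt : c < d
  mate_left : D.mate c = d
  mate_eq_self_of_mem (k : ℕ) :
    k ∈ Set.Icc c d → D.mate k ∈ Set.Icc c d → D.mate k = k ∨ k = c ∨ k = d

variable {D}

lemma mate_eq_self_of_not_hasChordIn {p q k : ℕ} (h : ¬ D.HasChordIn p q) (hk : k ∈ Set.Ico p q)
    (hmate : D.mate k ∈ Set.Ico p q) : D.mate k = k := by
  by_contra! hne
  rcases hne.lt_or_gt with hlt | hlt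
  · exact h ⟨D.mate k, hmate.1, by rwa [D.mate_mate], by rw [D.mate_mate]; exact hk.2⟩
  · exact h ⟨k, hk.1, hlt, hmate.2⟩

lemma HasChordIn.exists_isInnermostChord {p q : ℕ} (h : D.HasChordIn p q) :
    ∃ c d, p ≤ c ∧ d < q ∧ D.IsInnermostChord c d := by
  classical
  have hlength : ∃ l, ∃ i, p ≤ i ∧ i + l < q ∧ 0 < l ∧ D.mate i = i + l := by
    obtain ⟨i, hi⟩ := h
    exact ⟨D.mate i - i, i, by omega⟩
  obtain ⟨c, hpc, hq, hpos, hmate⟩ := Nat.find_spec hlength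
  have hmin {l : ℕ} := Nat.find_min (m := l) hlength
  refine ⟨c, _, hpc, hq, by omega, hmate, fun k hk hmk => ?_⟩
  by_contra! hne
  rcases hne.1.lt_or_gt with hlt | hlt
  · refine hmin (l := k - D.mate k) ?_ ⟨D.mate k, ?_⟩ <;> grind
  · refine hmin (l := D.mate k - k) ?_ ⟨k, ?_⟩ <;> grind

lemma HasChordIn.exists_first {p q : ℕ} (h : D.HasChordIn p q) :
    ∃ i j, p ≤ i ∧ i < j ∧ j < q ∧ D.mate i = j ∧ ¬ D.HasChordIn p j := by
  classical
  have hend : ∃ j, ∃ i, p ≤ i ∧ i < j ∧ j < q ∧ D.mate i = j :=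
    let ⟨i, hpi, hi, hq⟩ := h
    ⟨D.mate i, i, hpi, hi, hq, rfl⟩
  obtain ⟨i, hpi, hij, hq, hmate⟩ := Nat.find_spec hend
  refine ⟨i, _, hpi, hij, hq, hmate, fun ⟨k, hpk, hk, hkj⟩ => ?_⟩
  exact Nat.find_min hend hkj ⟨k, hpk, hk, by omega, rfl⟩

lemma isTwoRegularOn_of_mate_mem_iff {S : Set ℕ} (hS : S ⊆ Set.Iio n) (h0 : 0 ∈ S → a ∉ S)
    (hlast : n - 1 ∈ S → b ∉ S) (hnbr : ∀ k ∈ S, 0 < k ∧ k - 1 ∈ S ∨ k + 1 ∈ S)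
    (hmate : ∀ k ∈ S, D.mate k ∈ S ∧ D.mate k ≠ k ↔ ¬ (0 < k ∧ k - 1 ∈ S ∧ k + 1 ∈ S)) :
    IsTwoRegularOn D.graph S := by
  have hn : n ∉ S := fun h => lt_irrefl n (hS h)
  have := D.right_add_three_le
  refine D.isTwoRegularOn hS (fun h => ?_) (fun h => ?_) (fun hb h => ?_) (fun hb h => ?_) ?_
  · have := hnbr 0 h
    have := (hmate 0 h).2 (by simp)
    unfold ExactlyTwo
    tauto
  · have := hnbr _ h
    have := hmate _ h
    rw [Nat.sub_add_cancel (by omega)] at *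
    unfold ExactlyTwo
    tauto
  · have := hmate a h
    have := (D.mate_eq_self_iff a D.left_lt).2 ⟨hb, .inl rfl⟩
    unfold ExactlyTwo
    tauto
  · have := hmate b h
    have := (D.mate_eq_self_iff b (hS h)).2 ⟨hb, .inr rfl⟩
    unfold ExactlyTwo
    tauto
  · intro k hk h0 hkn hka hkb
    have := hmate k hk
    have := hnbr k hk
    have := D.mate_ne (hS hk) (.inr ⟨hka, hkb⟩)
    unfold ExactlyTwo
    tauto

lemma IsInnermostChord.isTwoRegularOn {c d : ℕ} (h : D.IsInnermostChord c d) (hd : d < n)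
    (h0 : c = 0 → d < a) (hlast : d + 1 = n → b < c) : IsTwoRegularOn D.graph (Set.Icc c d) := by
  have := h.lt
  have := h.mate_left
  have := D.mate_mate c
  have := h.mate_eq_self_of_mem
  refine isTwoRegularOn_of_mate_mem_iff (fun k => ?_) ?_ ?_ (fun k => ?_) (fun k => ?_) <;> grind

lemma isTwoRegularOn_Icc_union_Icc {p₁ q₁ p₂ q₂ : ℕ} (h₁ : p₁ < q₁) (h : q₁ + 1 < p₂)
    (h₂ : p₂ < q₂) (hn : q₂ < n) (h0 : p₁ = 0 → a ∉ Set.Icc p₁ q₁ ∪ Set.Icc p₂ q₂)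
    (hlast : q₂ + 1 = n → b ∉ Set.Icc p₁ q₁ ∪ Set.Icc p₂ q₂)
    (hmate : ∀ k ∈ Set.Icc p₁ q₁ ∪ Set.Icc p₂ q₂,
      D.mate k ∈ Set.Icc p₁ q₁ ∪ Set.Icc p₂ q₂ ∧ D.mate k ≠ k ↔
        k = p₁ ∨ k = q₁ ∨ k = p₂ ∨ k = q₂) :
    IsTwoRegularOn D.graph (Set.Icc p₁ q₁ ∪ Set.Icc p₂ q₂) := by
  refine isTwoRegularOn_of_mate_mem_iff (fun k => ?_) ?_ ?_ (fun k => ?_) (fun k hk => ?_)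
  · grind
  · grind
  · grind
  · grind
  · rw [hmate k hk]
    grind

lemma hasSplitting_of_closed (D : ChordDiagram n a b) (ha : a + 1 = n) :
    HasSplitting D.graph (Set.Iio n) := by
  have := D.closed_or_open
  have := D.right_add_three_le
  have hmate := D.not_frame_adj_mate
  simp only [frame_adj] at hmate
  obtain ⟨c, d, -, hdn, hcd⟩ : ∃ c d, 0 ≤ c ∧ d < n ∧ D.IsInnermostChord c d := by
    have := D.mate_lt (i := 1) (by omega)
    have := D.mate_ne (x := 1) (by omega) (by omega)
    have := hmate 1
    exact HasChordIn.exists_isInnermostChord ⟨1, by omega, by omega, by omega⟩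
  have := hcd.lt
  have := hcd.mate_left
  have := hmate c
  have htwo := hcd.isTwoRegularOn hdn (by omega) (by omega)
  by_cases hd : d + 1 < n
  · refine D.hasSplitting (r := d + 1) (by grind) htwo hcd.lt (by grind) (by grind) (by omega)
      (by grind) fun x ⟨hx, hxS⟩ => ?_
    simp only [Set.mem_Iio] at hx
    by_cases hxc : x < c
    · exact (D.reachableIn_of_segment hx (y := 0) (by omega) (by grind)).trans <|
        (D.reachableIn_zero_left (by grind) (by grind)).trans <|
        D.reachableIn_of_segment (by omega) hd (by grind)
    · exact D.reachableIn_of_segment hx hd (by grind)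
  · exact D.hasSplitting (r := c - 1) (by grind) htwo hcd.lt (by grind) (by grind) (by omega)
      (by grind) fun x ⟨hx, hxS⟩ => D.reachableIn_of_segment hx (by omega) (by grind)

lemma hasSplitting_of_two_intervals (D : ChordDiagram n a b) {p₁ q₁ p₂ q₂ : ℕ} (h₁ : p₁ < q₁)
    (hq₁ : q₁ < min a b) (hp₂ : max a b < p₂) (h₂ : p₂ < q₂) (hn : q₂ < n)
    (hmate : ∀ k ∈ Set.Icc p₁ q₁ ∪ Set.Icc p₂ q₂,
      D.mate k ∈ Set.Icc p₁ q₁ ∪ Set.Icc p₂ q₂ ∧ D.mate k ≠ k ↔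
        k = p₁ ∨ k = q₁ ∨ k = p₂ ∨ k = q₂) :
    HasSplitting D.graph (Set.Iio n) := by
  have htwo := isTwoRegularOn_Icc_union_Icc h₁ (by omega) h₂ hn (by grind) (by grind) hmate
  refine D.hasSplitting (s₁ := p₁) (s₂ := p₂) (r := a) (by grind) htwo (by omega) (by grind)
    (by grind) (by omega) (by grind) fun x ⟨hx, hxS⟩ => ?_
  simp only [Set.mem_Iio] at hx
  rcases lt_or_ge x p₁ with hxp | hxp
  · exact (D.reachableIn_of_segment hx (y := 0) (by omega) (by grind)).trans
      (D.reachableIn_zero_left (by grind) (by grind))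
  rcases lt_or_ge x p₂ with hxp' | hxp'
  · exact D.reachableIn_of_segment hx (by omega) (by grind)
  · exact (D.reachableIn_of_segment hx (y := n - 1) (by omega) (by grind)).trans <|
      (D.reachableIn_last_right (by grind) (by grind)).trans <|
      D.reachableIn_of_segment (by omega) (by omega) (by grind)

end ChordDiagram
end ChordDiagrams

section ThetaGraphs

namespace ChordDiagram

variable {n a b : ℕ} {D : ChordDiagram n a b}

lemma isTwoRegularOn_Iic_union_Icc {i j k : ℕ} (hb : 1 ≤ b) (hij : i + 1 < j) (hjk : j < k)
    (hkn : k < n) (hends : j = a ∧ k = D.mate i ∨ j = D.mate i ∧ k = a)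
    (hbS : b ∉ Set.Iic i ∪ Set.Icc j k)
    (hmate : ∀ l ∈ Set.Iic i ∪ Set.Icc j k, D.mate l ∈ Set.Iic i ∪ Set.Icc j k →
      D.mate l = l ∨ l = i ∨ l = D.mate i) :
    IsTwoRegularOn D.graph (Set.Iic i ∪ Set.Icc j k) := by
  have := D.mate_eq_self_iff a D.left_lt
  refine D.isTwoRegularOn (by grind) (fun h => ?_) (fun h => ?_) (fun _ _ => ?_) (fun _ h => ?_) ?_
  · have := hmate 0
    have := D.mate_ne (x := 0) (by omega) (by omega)
    grind [ExactlyTwo]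
  · grind [ExactlyTwo]
  · grind [ExactlyTwo]
  · grind [ExactlyTwo]
  · intro l hl h0 hln hla hlb
    have := D.mate_ne (x := l) (by omega) (by omega)
    grind [ExactlyTwo]

lemma hasSplitting_of_cross_chord {x : ℕ} (hb : 1 ≤ b) (hba : b < a) (hx : x < b)
    (hax : a < D.mate x) (hlow : ¬ D.HasChordIn 0 (x + 1))
    (hhigh : ¬ D.HasChordIn (a + 1) (D.mate x + 1)) : HasSplitting D.graph (Set.Iio n) := by
  classical
  have := D.closed_or_open
  have hcross : ∃ i, i < b ∧ a < D.mate i ∧ D.mate i ≤ D.mate x := ⟨x, hx, hax, le_rfl⟩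
  obtain ⟨i, ⟨hib, hai, hix⟩, hmin⟩ :
      ∃ i, (i < b ∧ a < D.mate i ∧ D.mate i ≤ D.mate x) ∧
        ∀ l < i, ¬ (l < b ∧ a < D.mate l ∧ D.mate l ≤ D.mate x) :=
    ⟨Nat.find hcross, Nat.find_spec hcross, fun l hl => Nat.find_min hcross hl⟩
  have hle : i ≤ x := by
    by_contra! h
    exact hmin x h ⟨hx, hax, le_rfl⟩
  have hin := D.mate_lt (i := i) (by omega)
  have hxn := D.mate_lt (i := x) (by omega)
  have hself_low {l : ℕ} := mate_eq_self_of_not_hasChordIn (k := l) hlow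
  have hself_high {l : ℕ} := mate_eq_self_of_not_hasChordIn (k := l) hhigh
  have hself_left := (D.mate_eq_self_iff a D.left_lt).2 ⟨hb, .inl rfl⟩
  have htwo : IsTwoRegularOn D.graph (Set.Iic i ∪ Set.Icc a (D.mate i)) := by
    refine isTwoRegularOn_Iic_union_Icc hb (by omega) hai hin (.inl ⟨rfl, rfl⟩) (by grind) ?_
    intro l hl hml
    have := hmin l
    have := hmin (D.mate l)
    have := D.mate_mate l
    grind
  refine D.hasSplitting (s₁ := 0) (s₂ := a) (r := b) (by grind) htwo (by omega) (by grind)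
    (by grind) (by grind) (by grind) fun l ⟨hl, hlS⟩ => ?_
  simp only [Set.mem_Iio] at hl
  rcases lt_or_ge l a with hla | hla
  · exact D.reachableIn_of_segment hl (by omega) (by grind)
  · exact (D.reachableIn_of_segment hl (y := n - 1) (by omega) (by grind)).trans
      (D.reachableIn_last_right (by grind) (by grind))

lemma hasSplitting_of_not_hasChordIn (hb : 1 ≤ b) (hba : b + 2 ≤ a) (hlow : ¬ D.HasChordIn 0 b)
    (hhigh : ¬ D.HasChordIn (a + 1) n) : HasSplitting D.graph (Set.Iio n) := by
  have := D.closed_or_open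
  by_cases hcross : ∃ x, x < b ∧ a < D.mate x
  · obtain ⟨x, hx, hax⟩ := hcross
    have := D.mate_lt (i := x) (by omega)
    exact hasSplitting_of_cross_chord hb (by omega) hx hax (by grind [HasChordIn])
      (by grind [HasChordIn])
  have hself (k : ℕ) (hk : k ∈ Set.Iic b ∪ Set.Ico a n)
      (hmk : D.mate k ∈ Set.Iic b ∪ Set.Ico a n) : D.mate k = k := by
    have := mate_eq_self_of_not_hasChordIn (k := k) hlow
    have := mate_eq_self_of_not_hasChordIn (k := k) hhigh
    have := (D.mate_eq_self_iff a (by omega)).2 ⟨hb, .inl rfl⟩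
    have := (D.mate_eq_self_iff b (by omega)).2 ⟨hb, .inr rfl⟩
    have := D.mate_mate k
    grind
  have htwo : IsTwoRegularOn D.graph (Set.Iic b ∪ Set.Ico a n) := by
    refine D.isTwoRegularOn (by grind) (fun h => ?_) (fun h => ?_) (fun _ h => ?_)
      (fun _ _ => ?_) ?_
    · have := D.mate_ne (x := 0) (by omega) (by omega)
      grind [ExactlyTwo]
    · have := D.mate_ne (x := n - 1) (by omega) (by omega)
      grind [ExactlyTwo]
    · grind [ExactlyTwo]
    · grind [ExactlyTwo]
    · intro k hk h0 hkn hka hkb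
      have := D.mate_ne (x := k) (by omega) (by omega)
      grind [ExactlyTwo]
  exact D.hasSplitting (s₁ := 0) (s₂ := a) (r := b + 1) (by grind) htwo (by omega) (by grind)
    (by grind) (by grind) (by grind) fun k ⟨hk, hkS⟩ =>
      D.reachableIn_of_segment hk (by omega) (by grind)

lemma hasSplitting_of_hasChordIn (hb : 1 ≤ b) (hba : b < a) (hlow : D.HasChordIn 0 b)
    (hhigh : D.HasChordIn (a + 1) n) : HasSplitting D.graph (Set.Iio n) := by
  obtain ⟨i, j, -, hij, hjb, hmi, hfirst⟩ := hlow.exists_first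
  obtain ⟨k, l, hak, hkl, hln, hmk, hfirst'⟩ := hhigh.exists_first
  have := D.mate_mate i
  have := D.mate_mate k
  by_cases hcross : ∃ x, i ≤ x ∧ x ≤ j ∧ k ≤ D.mate x ∧ D.mate x ≤ l
  · obtain ⟨x, hx⟩ := hcross
    have := D.mate_mate x
    exact hasSplitting_of_cross_chord (x := x) hb hba (by omega) (by omega)
      (by grind [HasChordIn]) (by grind [HasChordIn])
  refine D.hasSplitting_of_two_intervals hij (q₁ := j) (p₂ := k) (by omega) (by omega) hkl hln
    fun x hx => ⟨fun ⟨_, _⟩ => ?_, ?_⟩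
  · have := mate_eq_self_of_not_hasChordIn (k := x) hfirst
    have := mate_eq_self_of_not_hasChordIn (k := x) hfirst'
    have := D.mate_mate x
    grind
  · grind

end ChordDiagram
end ThetaGraphs

section Dumbbells

namespace ChordDiagram

variable {n a b : ℕ} {D : ChordDiagram n a b}

/-- The interval `[c, d]` to the right of `a < b` spans an induced cycle, closed either by a chord
or by the frame edge between `n - 1` and `b`. -/
structure IsRightCycle (D : ChordDiagram n a b) (c d : ℕ) : Prop where
  lt : c < d
  lt_size : d < n
  right_le : b ≤ c
  eq_last : b = c → d + 1 = n
  isTwoRegularOn : IsTwoRegularOn D.graph (Set.Icc c d)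
  mate_eq_self_of_mem (k : ℕ) :
    k ∈ Set.Icc c d → D.mate k ∈ Set.Icc c d → D.mate k = k ∨ k = c ∨ k = d

lemma exists_isRightCycle (D : ChordDiagram n a b) (hab : a < b) :
    ∃ c d, D.IsRightCycle c d := by
  have := D.two_le_left
  have := D.right_add_three_le
  by_cases hchord : D.HasChordIn (b + 1) n
  · obtain ⟨c, d, hbc, hdn, h⟩ := hchord.exists_isInnermostChord
    exact ⟨c, d, h.lt, hdn, by omega, by omega,
      h.isTwoRegularOn hdn (by omega) (by omega), h.mate_eq_self_of_mem⟩
  have hself (k : ℕ) (hk : k ∈ Set.Icc b (n - 1)) (hmk : D.mate k ∈ Set.Icc b (n - 1)) :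
      D.mate k = k := by
    have := mate_eq_self_of_not_hasChordIn (k := k) hchord
    have := (D.mate_eq_self_iff b (by omega)).2 ⟨by omega, .inr rfl⟩
    have := D.mate_mate k
    grind
  refine ⟨b, n - 1, by omega, by omega, le_rfl, by omega, ?_, fun k hk hmk => .inl (hself k hk hmk)⟩
  refine D.isTwoRegularOn (by grind) (by grind) (fun h => ?_) (by grind) (fun _ h => ?_) ?_
  · have := hself (n - 1) h
    have := D.mate_ne (x := n - 1) (by omega) (by omega)
    grind [ExactlyTwo]
  · grind [ExactlyTwo]
  · intro k hk h0 hkn hka hkb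
    have := hself k hk
    have := D.mate_ne (x := k) (by omega) (by omega)
    grind [ExactlyTwo]

lemma IsRightCycle.hasSplitting {c d s : ℕ} {P : Set ℕ} (hC : D.IsRightCycle c d) (hab : a < b)
    (hPa : P ⊆ Set.Iic a) (hP : IsTwoRegularOn D.graph P) (ha : a ∈ P → a + 1 < c) (hs : s ∈ P)
    (has : a ∈ P ∨ s < a) (hPC : ∀ k ∈ P, D.mate k ∉ Set.Icc c d)
    (hconn : ∀ k ≤ a, k ∉ P → ReachableIn D.graph (Set.Iio n \ (P ∪ Set.Icc c d)) k (c - 1)) :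
    HasSplitting D.graph (Set.Iio n) := by
  have := hC.lt
  have := hC.lt_size
  have := hC.right_le
  have := hC.eq_last
  have := hPa hs
  have hnot {k : ℕ} (hk : a < k) : k ∉ P := fun h => by grind [hPa h]
  have htwo : IsTwoRegularOn D.graph (P ∪ Set.Icc c d) := by
    refine hP.union hC.isTwoRegularOn fun x hx y hy hxy => ?_
    have := hPa hx
    rw [D.graph_adj, frame_adj] at hxy
    grind
  refine D.hasSplitting (s₁ := s) (s₂ := c) (r := c - 1) ?_ htwo (by grind) (.inl hs) (by grind)
    (by grind) (by grind) fun k ⟨hk, hkS⟩ => ?_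
  · grind
  simp only [Set.mem_Iio] at hk
  rcases le_or_gt k a with hka | hka
  · exact hconn k hka (by grind)
  rcases lt_or_ge k c with hkc | hkc
  · exact D.reachableIn_of_segment hk (by omega) (by grind)
  · exact (D.reachableIn_of_segment hk (y := n - 1) (by omega) (by grind)).trans <|
      (D.reachableIn_last_right (by grind) (by grind)).trans <|
      D.reachableIn_of_segment (by omega) (by omega) (by grind)

lemma IsRightCycle.hasSplitting_of_hasChordIn {c d p q : ℕ} (hC : D.IsRightCycle c d)
    (hab : a < b) (hq : q ≤ a) (hchord : D.HasChordIn p q)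
    (hmate : ∀ k ∈ Set.Ico p q, D.mate k ∉ Set.Icc c d) : HasSplitting D.graph (Set.Iio n) := by
  obtain ⟨i, j, hpi, hjq, hij⟩ := hchord.exists_isInnermostChord
  have := hC.lt
  have := hC.lt_size
  have := hC.right_le
  have := hij.lt
  refine hC.hasSplitting (s := i) (P := Set.Icc i j) hab (by grind)
    (hij.isTwoRegularOn (by omega) (by omega) (by omega)) (by grind) (by grind) (by grind)
    (by grind) fun k hka hkS => ?_
  rcases lt_or_ge k i with hki | hki
  · exact (D.reachableIn_of_segment (by omega) (y := 0) (by omega) (by grind)).trans <|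
      (D.reachableIn_zero_left (by grind) (by grind)).trans <|
      D.reachableIn_of_segment (by omega) (by omega) (by grind)
  · exact D.reachableIn_of_segment (by omega) (by omega) (by grind)

lemma IsRightCycle.hasSplitting_of_two_mates {c d u₁ u₂ : ℕ} (hC : D.IsRightCycle c d)
    (hab : a < b) (hu : u₁ < u₂) (hua : u₂ < a) (hu₁ : D.mate u₁ ∈ Set.Icc c d)
    (hu₂ : D.mate u₂ ∈ Set.Icc c d) : HasSplitting D.graph (Set.Iio n) := by
  classical
  obtain ⟨u₂, ⟨hu, hua, hu₂⟩, hmin⟩ : ∃ k, (u₁ < k ∧ k < a ∧ D.mate k ∈ Set.Icc c d) ∧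
      ∀ l < k, ¬ (u₁ < l ∧ l < a ∧ D.mate l ∈ Set.Icc c d) :=
    have hex : ∃ k, u₁ < k ∧ k < a ∧ D.mate k ∈ Set.Icc c d := ⟨u₂, hu, hua, hu₂⟩
    ⟨Nat.find hex, Nat.find_spec hex, fun l hl => Nat.find_min hex hl⟩
  by_cases hchord : D.HasChordIn (u₁ + 1) u₂
  · exact hC.hasSplitting_of_hasChordIn hab hua.le hchord (by grind)
  have := hC.lt
  have := hC.lt_size
  have := hC.right_le
  have := (D.mate_eq_self_iff b (by omega)).2 ⟨by omega, .inr rfl⟩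
  have := D.mate_mate u₁
  have := D.mate_mate u₂
  refine D.hasSplitting_of_two_intervals hu (p₂ := min (D.mate u₁) (D.mate u₂))
    (q₂ := max (D.mate u₁) (D.mate u₂)) (by omega) (by grind) (by grind) (by grind)
    fun k hk => ⟨fun ⟨_, _⟩ => ?_, by grind⟩
  have := mate_eq_self_of_not_hasChordIn (k := k) hchord
  have := hC.mate_eq_self_of_mem k
  grind

lemma IsRightCycle.hasSplitting_of_mem_Ioo_mate {c d i₀ p u : ℕ} (hC : D.IsRightCycle c d)
    (hab : a < b) (hu : ∀ k < a, k ≠ u → D.mate k ∉ Set.Icc c d)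
    (hcross : ∀ i, i < D.mate i → D.mate i < a → u ∈ Set.Ioo i (D.mate i))
    (hp : p ∈ Set.Ioo i₀ (D.mate i₀)) (hia : D.mate i₀ < a) (hpu : p ≠ u)
    (hap : a < D.mate p) : HasSplitting D.graph (Set.Iio n) := by
  classical
  have hover : ∃ i, i < p ∧ p < D.mate i ∧ D.mate i < a := ⟨i₀, hp.1, hp.2, hia⟩
  obtain ⟨i, ⟨hip, hpi, hia⟩, hmin⟩ : ∃ i, (i < p ∧ p < D.mate i ∧ D.mate i < a) ∧
      ∀ l < i, ¬ (l < p ∧ p < D.mate l ∧ D.mate l < a) :=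
    ⟨Nat.find hover, Nat.find_spec hover, fun l hl => Nat.find_min hover hl⟩
  have := hC.lt
  have := hC.lt_size
  have := hC.right_le
  have := D.right_add_three_le
  have := D.mate_lt (i := p) (by omega)
  have hpc : D.mate p < c ∨ b < c := by
    have := hC.eq_last
    have := hu p (by omega) hpu
    grind
  have hleft := (D.mate_eq_self_iff a (by omega)).2 ⟨by omega, .inl rfl⟩
  have := D.mate_mate p
  have htwo : IsTwoRegularOn D.graph (Set.Iic i ∪ Set.Icc (D.mate i) a) := by
    refine isTwoRegularOn_Iic_union_Icc (by omega) (by omega) hia (by omega) (.inr ⟨rfl, rfl⟩)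
      (by grind) fun l hl hml => ?_
    have := hmin (D.mate l)
    have := hcross l
    have := hcross (D.mate l)
    have := hcross i
    have := D.mate_mate l
    grind
  refine hC.hasSplitting (s := a) hab (by grind) htwo (by grind) (by grind) (by grind) ?_ ?_
  · intro k hk
    have := hcross i
    have := hu k
    grind
  intro k hka hkS
  refine ((D.reachableIn_of_segment (by omega) (y := p) (by omega) (by grind)).trans <|
    .of_adj (D.adj_mate (by omega)) (by grind) (by grind)).trans ?_
  rcases lt_or_ge (D.mate p) c with hpc | hpc
  · exact D.reachableIn_of_segment (by omega) (by omega) (by grind)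
  · exact (D.reachableIn_of_segment (by omega) (y := n - 1) (by omega) (by grind)).trans <|
      (D.reachableIn_last_right (by grind) (by grind)).trans <|
      D.reachableIn_of_segment (by omega) (by omega) (by grind)

lemma IsRightCycle.hasSplitting_of_square {c d p₁ q₁ p₂ q₂ z : ℕ} (hC : D.IsRightCycle c d)
    (hab : a < b) (h₁ : p₁ < q₁) (hqz : q₁ < z) (hzp : z < p₂) (h₂ : p₂ < q₂) (hqa : q₂ < a)
    (hz : D.mate z < p₁ ∨ q₂ < D.mate z ∧ D.mate z < a)
    (hmate : ∀ k ∈ Set.Icc p₁ q₁ ∪ Set.Icc p₂ q₂,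
      D.mate k ∈ Set.Icc p₁ q₁ ∪ Set.Icc p₂ q₂ ∧ D.mate k ≠ k ↔
        k = p₁ ∨ k = q₁ ∨ k = p₂ ∨ k = q₂)
    (hPC : ∀ k ∈ Set.Icc p₁ q₁ ∪ Set.Icc p₂ q₂, D.mate k ∉ Set.Icc c d) :
    HasSplitting D.graph (Set.Iio n) := by
  have := hC.lt
  have := hC.lt_size
  have := hC.right_le
  have hlow {k : ℕ} (hk : k < p₁) : ReachableIn D.graph
      (Set.Iio n \ (Set.Icc p₁ q₁ ∪ Set.Icc p₂ q₂ ∪ Set.Icc c d)) k a :=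
    (D.reachableIn_of_segment (by omega) (y := 0) (by omega) (by grind)).trans
      (D.reachableIn_zero_left (by grind) (by grind))
  have hhigh {k : ℕ} (hk : q₂ < k) (hka : k ≤ a) : ReachableIn D.graph
      (Set.Iio n \ (Set.Icc p₁ q₁ ∪ Set.Icc p₂ q₂ ∪ Set.Icc c d)) k a :=
    D.reachableIn_of_segment (by omega) (by omega) (by grind)
  refine hC.hasSplitting (s := p₁) hab (by grind) (isTwoRegularOn_Icc_union_Icc h₁ (by omega) h₂
    (by omega) (by grind) (by grind) hmate) (by grind) (by grind) (by grind) hPC fun k hka hkS => ?_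
  refine .trans (y := a) ?_ (D.reachableIn_of_segment (by omega) (by omega) (by grind))
  rcases lt_or_ge k p₁ with hk₁ | hk₁
  · exact hlow hk₁
  rcases lt_or_ge q₂ k with hk₂ | hk₂
  · exact hhigh hk₂ hka
  refine ((D.reachableIn_of_segment (by omega) (y := z) (by omega) (by grind)).trans <|
    .of_adj (D.adj_mate (by omega)) (by grind) (by grind)).trans ?_
  rcases hz with hz | hz
  · exact hlow hz
  · exact hhigh hz.1 hz.2.le

end ChordDiagram
end Dumbbells

section SpanningPaths

variable {V : Type*} {Γ : SimpleGraph V} {s : Set V} {x y z : V}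

/-- `Γ` has a path from `x` to `y` whose vertices are exactly those of `s`. -/
def HasSpanningPath (Γ : SimpleGraph V) (s : Set V) (x y : V) : Prop :=
  ∃ p : Γ.Walk x y, p.IsPath ∧ ∀ z, z ∈ p.support ↔ z ∈ s

lemma HasSpanningPath.singleton (Γ : SimpleGraph V) (x : V) : HasSpanningPath Γ {x} x x :=
  ⟨.nil, .nil, by simp⟩

lemma HasSpanningPath.concat (h : HasSpanningPath Γ s x y) (hz : z ∉ s) (hyz : Γ.Adj y z) :
    HasSpanningPath Γ (insert z s) x z := by
  obtain ⟨p, hp, hps⟩ := h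
  exact ⟨p.concat hyz, hp.concat (by rwa [hps]) hyz, fun w => by simp [hps, or_comm]⟩

end SpanningPaths

section NestedDumbbells

namespace ChordDiagram

variable {n a b c d u p q : ℕ} {D : ChordDiagram n a b}

/-- `u` is the only vertex left of `a` with mate in `[c, d]`, every chord inside `[0, a)` passes
over `u`, and no vertex other than `u` strictly below such a chord has its mate beyond `a`. -/
structure IsNested (D : ChordDiagram n a b) (c d u : ℕ) : Prop where
  pos : 0 < u
  lt_left : u < a
  mate_zero_lt : D.mate 0 < a
  mate_notMem (k : ℕ) : k < a → k ≠ u → D.mate k ∉ Set.Icc c d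
  mem_Ioo_mate (i : ℕ) : i < D.mate i → D.mate i < a → u ∈ Set.Ioo i (D.mate i)
  mate_lt_left (i x : ℕ) :
    D.mate i < a → x ∈ Set.Ioo i (D.mate i) → x ≠ u → D.mate x < a

/-- The interval `[p, q]` is closed under mates, except for the vertex `u`, which is joined to both
ends of the interval by a Hamiltonian path of the interval. -/
structure IsBlock (D : ChordDiagram n a b) (u p q : ℕ) : Prop where
  le_centre : p ≤ u
  centre_le : u ≤ q
  mate_mem (x : ℕ) : x ∈ Set.Icc p q → x ≠ u → D.mate x ∈ Set.Icc p q
  hasSpanningPath_left : HasSpanningPath D.graph (Set.Icc p q) u p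
  hasSpanningPath_right : HasSpanningPath D.graph (Set.Icc p q) u q

lemma isBlock_self (D : ChordDiagram n a b) (u : ℕ) : D.IsBlock u u u where
  le_centre := le_rfl
  centre_le := le_rfl
  mate_mem x hx hxu := by grind
  hasSpanningPath_left := by rw [Set.Icc_self]; exact .singleton _ _
  hasSpanningPath_right := by rw [Set.Icc_self]; exact .singleton _ _

lemma IsBlock.insert_chord {y : ℕ} (hB : D.IsBlock u (y + 1) q) (hq : q + 1 < n)
    (hy : D.mate y = q + 1) : D.IsBlock u y (q + 1) := by
  have := hB.le_centre
  have := hB.centre_le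
  have hset : Set.Icc y (q + 1) = insert y (insert (q + 1) (Set.Icc (y + 1) q)) := by grind
  have hchord := D.adj_mate (i := y) (by omega)
  rw [hy] at hchord
  refine ⟨by omega, by omega, fun x hx hxu => ?_, ?_, ?_⟩
  · have := hB.mate_mem x
    have := D.mate_mate y
    grind
  · rw [hset]
    exact (hB.hasSpanningPath_right.concat (by grind) (D.adj_succ hq)).concat (by grind) hchord.symm
  · rw [hset, Set.insert_comm]
    exact (hB.hasSpanningPath_left.concat (by grind) (D.adj_succ (by omega)).symm).concat
      (by grind) hchord

lemma IsBlock.insert_crossing_chords {w : ℕ} (hB : D.IsBlock u (w + 2) q) (hq : q + 2 < n)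
    (hw : D.mate w = q + 1) (hy : D.mate (w + 1) = q + 2) : D.IsBlock u w (q + 2) := by
  have := hB.le_centre
  have := hB.centre_le
  have hset : Set.Icc w (q + 2) =
      insert w (insert (w + 1) (insert (q + 2) (insert (q + 1) (Set.Icc (w + 2) q)))) := by grind
  have hset' : Set.Icc w (q + 2) =
      insert (q + 2) (insert (q + 1) (insert w (insert (w + 1) (Set.Icc (w + 2) q)))) := by grind
  have hchord := D.adj_mate (i := w) (by omega)
  have hchord' := D.adj_mate (i := w + 1) (by omega)
  rw [hw] at hchord
  rw [hy] at hchord'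
  refine ⟨by omega, by omega, fun x hx hxu => ?_, ?_, ?_⟩
  · have := hB.mate_mem x
    have := D.mate_mate w
    have := D.mate_mate (w + 1)
    grind
  · rw [hset]
    exact (((hB.hasSpanningPath_right.concat (by grind) (D.adj_succ (by omega))).concat (by grind)
      (D.adj_succ (by omega))).concat (by grind) hchord'.symm).concat (by grind)
      (D.adj_succ (by omega)).symm
  · rw [hset']
    exact (((hB.hasSpanningPath_left.concat (by grind) (D.adj_succ (by omega)).symm).concat
      (by grind) (D.adj_succ (by omega)).symm).concat (by grind) hchord).concat (by grind)
      (D.adj_succ (by omega))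

namespace IsNested

variable {x : ℕ}

lemma mate_lt_of_lt (hN : D.IsNested c d u) (hx : x < u) : D.mate x < a := by
  have := hN.mem_Ioo_mate 0
  have := hN.mate_lt_left 0 x
  have := hN.mate_zero_lt
  have := D.mate_ne (x := 0)
  have := D.left_lt
  have := D.two_le_left
  have := D.closed_or_open
  grind

lemma lt_mate (hN : D.IsNested c d u) (hab : a < b) (hB : D.IsBlock u p q) (hx : x < p) :
    q < D.mate x := by
  have := hB.le_centre
  have := hN.lt_left
  have := hN.mate_lt_of_lt (x := x) (by omega)
  have := hN.mem_Ioo_mate x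
  have := hN.mem_Ioo_mate (D.mate x)
  have := hB.mate_mem (D.mate x)
  have := D.mate_ne (x := x) (by have := D.left_lt; omega) (by omega)
  have := D.mate_mate x
  grind

lemma mate_lt (hN : D.IsNested c d u) (hab : a < b) (hB : D.IsBlock u p q) (hx : q < x)
    (hxa : x < a) (hmx : D.mate x < a) : D.mate x < p := by
  have := hB.centre_le
  have := hN.mem_Ioo_mate x
  have := hN.mem_Ioo_mate (D.mate x)
  have := hB.mate_mem (D.mate x)
  have := D.mate_ne (x := x) (by have := D.left_lt; omega) (by omega)
  have := D.mate_mate x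
  grind

lemma hasSplitting_of_square {p₁ q₁ p₂ q₂ z : ℕ} (hN : D.IsNested c d u)
    (hC : D.IsRightCycle c d) (hab : a < b) (h₁ : p₁ < q₁) (hqu : q₁ < u) (hup : u < p₂)
    (h₂ : p₂ < q₂) (hqa : q₂ < a) (hmate : (D.mate p₁ = p₂ ∧ D.mate q₁ = q₂) ∨
      D.mate p₁ = q₂ ∧ D.mate q₁ = p₂) (hIcc : q₁ = p₁ + 1 ∨ q₂ = p₂ + 1)
    (hqz : q₁ < z) (hzp : z < p₂) (hz : D.mate z < p₁ ∨ q₂ < D.mate z ∧ D.mate z < a) :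
    HasSplitting D.graph (Set.Iio n) := by
  have := D.mate_mate p₁
  have := D.mate_mate q₁
  refine hC.hasSplitting_of_square hab h₁ hqz hzp h₂ hqa hz (fun k hk => ⟨fun ⟨_, _⟩ => ?_, ?_⟩)
    fun k hk => hN.mate_notMem k (by grind) (by grind)
  · have := hN.mem_Ioo_mate k
    have := hN.mem_Ioo_mate (D.mate k)
    have := D.mate_mate k
    grind
  · grind

lemma hasSplitting_or_exists_isBlock (hN : D.IsNested c d u) (hC : D.IsRightCycle c d)
    (hab : a < b) (hB : D.IsBlock u p q) (hpq : p + q = 2 * u) (hp : 0 < p) :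
    HasSplitting D.graph (Set.Iio n) ∨
      ∃ p' q', p' < p ∧ p' + q' = 2 * u ∧ q' < a ∧ D.IsBlock u p' q' := by
  obtain ⟨y, rfl⟩ : ∃ y, p = y + 1 := ⟨p - 1, by omega⟩
  have := hB.le_centre
  have := D.left_lt
  have hya := hN.mate_lt_of_lt (x := y) (by omega)
  have hqy := hN.lt_mate hab hB (x := y) (by omega)
  by_cases hyq : D.mate y = q + 1
  · exact .inr ⟨y, q + 1, by omega, by omega, by omega, hB.insert_chord (by omega) hyq⟩
  have hbelow {x : ℕ} (hqx : q < x) (hxy : x < D.mate y) : D.mate x ≤ y :=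
    Nat.lt_succ_iff.1 <| hN.mate_lt hab hB hqx (by omega) <|
      hN.mate_lt_left y x hya ⟨by omega, hxy⟩ (by omega)
  have hyy := D.mate_mate y
  have hzy := hbelow (x := q + 1) (by omega) (by omega)
  have hzz := D.mate_mate (q + 1)
  obtain ⟨w, rfl⟩ : ∃ w, y = w + 1 := ⟨y - 1, by grind⟩
  have hwa := hN.mate_lt_of_lt (x := w) (by omega)
  have hqw := hN.lt_mate hab hB (x := w) (by omega)
  have hww := D.mate_mate w
  have hwy : D.mate w ≠ D.mate (w + 1) := fun h => by grind
  by_cases hwq : D.mate w = q + 1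
  · by_cases hyq' : D.mate (w + 1) = q + 2
    · exact .inr ⟨w, q + 2, by omega, by omega, by omega,
        hB.insert_crossing_chords (by omega) hwq hyq'⟩
    have := hbelow (x := q + 2) (by omega) (by omega)
    have := D.mate_mate (q + 2)
    refine .inl <| hN.hasSplitting_of_square (p₁ := D.mate (q + 2)) (q₁ := w) (p₂ := q + 1)
      (q₂ := q + 2) (z := w + 1) hC hab ?_ ?_ ?_ ?_ ?_ ?_ ?_ ?_ ?_ ?_ <;> grind
  · refine .inl <| hN.hasSplitting_of_square (p₁ := w) (q₁ := w + 1)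
      (p₂ := min (D.mate w) (D.mate (w + 1))) (q₂ := max (D.mate w) (D.mate (w + 1)))
      (z := q + 1) hC hab ?_ ?_ ?_ ?_ ?_ ?_ ?_ ?_ ?_ ?_ <;> grind

lemma hasSplitting_or_hasSpanningPath (hN : D.IsNested c d u) (hC : D.IsRightCycle c d)
    (hab : a < b) : HasSplitting D.graph (Set.Iio n) ∨
      2 * u < a ∧ HasSpanningPath D.graph (Set.Iic (2 * u)) u (2 * u) := by
  suffices h : ∀ p q, p + q = 2 * u → q < a → D.IsBlock u p q → HasSplitting D.graph (Set.Iio n) ∨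
      2 * u < a ∧ HasSpanningPath D.graph (Set.Iic (2 * u)) u (2 * u) from
    h u u (by omega) hN.lt_left (D.isBlock_self u)
  intro p
  induction p using Nat.strong_induction_on with
  | _ p ih =>
    intro q hpq hqa hB
    rcases Nat.eq_zero_or_pos p with rfl | hp
    · obtain rfl : q = 2 * u := by omega
      refine .inr ⟨hqa, ?_⟩
      rw [show Set.Iic (2 * u) = Set.Icc 0 (2 * u) by grind]
      exact hB.hasSpanningPath_right
    · rcases hN.hasSplitting_or_exists_isBlock hC hab hB hpq hp with h | ⟨p', q', h⟩
      · exact .inl h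
      · exact ih p' h.1 q' h.2.1 h.2.2.1 h.2.2.2

end IsNested

lemma IsRightCycle.hasSplitting_or_isNested (hC : D.IsRightCycle c d) (hab : a < b)
    (h0 : D.mate 0 < a) :
    HasSplitting D.graph (Set.Iio n) ∨ ∃ u, D.mate u ∈ Set.Icc c d ∧ D.IsNested c d u := by
  rw [or_iff_not_imp_left]
  intro hsplit
  have := hC.right_le
  have := D.two_le_left
  have := D.left_lt
  have := D.mate_ne (x := 0) (by omega) (by omega)
  have hex : ∃ u, u < a ∧ D.mate u ∈ Set.Icc c d := by
    by_contra! h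
    exact hsplit <| hC.hasSplitting_of_hasChordIn hab le_rfl ⟨0, le_rfl, by omega, h0⟩
      fun k hk => h k hk.2
  obtain ⟨u, hua, hu⟩ := hex
  have hunique (k : ℕ) (hk : k < a) (hku : k ≠ u) : D.mate k ∉ Set.Icc c d := by
    intro hmk
    rcases hku.lt_or_gt with hlt | hlt
    · exact hsplit (hC.hasSplitting_of_two_mates hab hlt hua hmk hu)
    · exact hsplit (hC.hasSplitting_of_two_mates hab hlt hk hu hmk)
  have hcross (i : ℕ) (hi : i < D.mate i) (hia : D.mate i < a) : u ∈ Set.Ioo i (D.mate i) := by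
    have := D.mate_mate i
    by_contra hui
    rcases lt_or_ge i u with hiu | hui
    · exact hsplit <| hC.hasSplitting_of_hasChordIn (p := 0) (q := u) hab (by omega)
        ⟨i, by omega, hi, by grind⟩ (by grind)
    · exact hsplit <| hC.hasSplitting_of_hasChordIn (p := u + 1) (q := a) hab (by omega)
        ⟨i, by grind, hi, by grind⟩ (by grind)
  refine ⟨u, hu, by grind, hua, h0, hunique, hcross, fun i x hi hx hxu => ?_⟩
  by_contra! hax
  have := (D.mate_eq_self_iff a (by omega)).2 ⟨by omega, .inl rfl⟩
  have := D.mate_mate x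
  exact hsplit <| hC.hasSplitting_of_mem_Ioo_mate hab hunique hcross hx hi hxu (by grind)

lemma hasSplitting_or_hasSpanningPath (D : ChordDiagram n a b) (hab : a < b) (h0 : D.mate 0 < a) :
    HasSplitting D.graph (Set.Iio n) ∨
      ∃ u, 2 * u < a ∧ b < D.mate u ∧ HasSpanningPath D.graph (Set.Iic (2 * u)) u (2 * u) := by
  have := D.two_le_left
  obtain ⟨c, d, hC⟩ := D.exists_isRightCycle hab
  rcases hC.hasSplitting_or_isNested hab h0 with h | ⟨u, hu, hN⟩
  · exact .inl h
  refine (hN.hasSplitting_or_hasSpanningPath hC hab).imp_right fun h => ⟨u, h.1, ?_, h.2⟩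
  have := hC.lt
  have := hC.lt_size
  have := hC.right_le
  have := (D.mate_eq_self_iff b (by omega)).2 ⟨by omega, .inr rfl⟩
  have := D.mate_mate u
  grind

end ChordDiagram
end NestedDumbbells

section HamiltonianOrders

variable {V : Type*} {G : SimpleGraph V} {n a b : ℕ} {v : ℕ → V}

/-- `v 0, …, v (n - 1)` is a Hamiltonian path of `G`; the values `v i` with `n ≤ i` are junk. -/
structure IsHamiltonianOrder (G : SimpleGraph V) (n : ℕ) (v : ℕ → V) : Prop where
  bijOn : Set.BijOn v (Set.Iio n) Set.univ
  adj_succ (i : ℕ) : i + 1 < n → G.Adj (v i) (v (i + 1))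

namespace IsHamiltonianOrder

lemma exists_eq (hv : IsHamiltonianOrder G n v) (x : V) : ∃ i < n, v i = x :=
  hv.bijOn.surjOn (Set.mem_univ x)

lemma exists_forall_adj_iff (hv : IsHamiltonianOrder G n v)
    (hcubic : ∀ x, (G.neighborSet x).ncard = 3) (i : ℕ) :
    ∃ p q r, p < n ∧ q < n ∧ r < n ∧ p ≠ q ∧ p ≠ r ∧ q ≠ r ∧
      ∀ j < n, G.Adj (v i) (v j) ↔ j = p ∨ j = q ∨ j = r := by
  obtain ⟨x, y, z, hxy, hxz, hyz, hN⟩ := Set.ncard_eq_three.1 (hcubic (v i))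
  obtain ⟨p, hp, rfl⟩ := hv.exists_eq x
  obtain ⟨q, hq, rfl⟩ := hv.exists_eq y
  obtain ⟨r, hr, rfl⟩ := hv.exists_eq z
  refine ⟨p, q, r, hp, hq, hr, ne_of_apply_ne v hxy, ne_of_apply_ne v hxz, ne_of_apply_ne v hyz,
    fun j hj => ?_⟩
  have eq_iff {k} (hk : k < n) : v j = v k ↔ j = k := hv.bijOn.injOn.eq_iff hj hk
  rw [← mem_neighborSet, hN]
  simp [eq_iff, hp, hq, hr]

lemma adj_of_frame_adj (hv : IsHamiltonianOrder G n v) (h0 : G.Adj (v 0) (v a))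
    (h1 : G.Adj (v (n - 1)) (v b)) {i j : ℕ} (h : (frame n a b).Adj i j) : G.Adj (v i) (v j) := by
  obtain ⟨-, hi, hj, rfl | rfl | ⟨rfl, rfl⟩ | ⟨rfl, rfl⟩ | ⟨hi, rfl⟩ | ⟨rfl, hj⟩⟩ := frame_adj.1 h
  · exact hv.adj_succ i hj
  · exact (hv.adj_succ j hi).symm
  · exact h0
  · exact h0.symm
  · rwa [show i = n - 1 by omega]
  · rw [show j = n - 1 by omega]
    exact h1.symm

/-- The end `m` of the chord at `i`, or `i` itself if the frame already has three edges at `i`. -/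
lemma exists_chord (hv : IsHamiltonianOrder G n v)
    (hcubic : ∀ x, (G.neighborSet x).ncard = 3) (ha : 2 ≤ a) (hb : b + 3 ≤ n)
    (hopen : a + 1 = n ∧ b = 0 ∨ a + 2 ≤ n ∧ 1 ≤ b)
    (h0 : G.Adj (v 0) (v a)) (h1 : G.Adj (v (n - 1)) (v b)) {i : ℕ} (hi : i < n) :
    ∃ m < n, ¬ (frame n a b).Adj i m ∧ (m = i ↔ 1 ≤ b ∧ (i = a ∨ i = b)) ∧
      ∀ j < n, G.Adj (v i) (v j) ↔ (frame n a b).Adj i j ∨ m = j ∧ i ≠ j := by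
  obtain ⟨p, q, r, hp, hq, hr, hpq, hpr, hqr, hadj⟩ := hv.exists_forall_adj_iff hcubic i
  have hsub j (h : (frame n a b).Adj i j) : j = p ∨ j = q ∨ j = r :=
    (hadj j (frame_adj.1 h).2.2.1).1 (hv.adj_of_frame_adj h0 h1 h)
  have hirrefl : ¬ (i = p ∨ i = q ∨ i = r) := fun h => G.irrefl ((hadj i hi).2 h)
  by_cases hbranch : 1 ≤ b ∧ (i = a ∨ i = b)
  · obtain ⟨x, y, z, hxy, hxz, hyz, hx, hy, hz⟩ : ∃ x y z, x ≠ y ∧ x ≠ z ∧ y ≠ z ∧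
        (frame n a b).Adj i x ∧ (frame n a b).Adj i y ∧ (frame n a b).Adj i z := by
      refine ⟨i - 1, i + 1, if i = a then 0 else n - 1, ?_⟩
      simp only [frame_adj]
      grind
    refine ⟨i, hi, (frame n a b).irrefl, by simp [hbranch], fun j hj => ?_⟩
    grind
  · obtain ⟨x, y, hxy, hframe⟩ : ∃ x y, x ≠ y ∧ ∀ j, (frame n a b).Adj i j ↔ j = x ∨ j = y := by
      refine ⟨if i = 0 then 1 else i - 1, if i = 0 then a else if i + 1 = n then b else i + 1,
        by split_ifs <;> omega, fun j => ?_⟩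
      rw [frame_adj]
      split_ifs <;> omega
    have hx := hsub x ((hframe x).2 (.inl rfl))
    have hy := hsub y ((hframe y).2 (.inr rfl))
    obtain ⟨m, hm, hmx, hmy⟩ : ∃ m, (m = p ∨ m = q ∨ m = r) ∧ m ≠ x ∧ m ≠ y := by
      by_contra! h
      have := h p (.inl rfl)
      have := h q (.inr (.inl rfl))
      have := h r (.inr (.inr rfl))
      omega
    exact ⟨m, by omega, by rw [hframe]; omega, by omega,
      fun j hj => by rw [hadj j hj, hframe]; omega⟩

lemma exists_chordDiagram (hv : IsHamiltonianOrder G n v)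
    (hcubic : ∀ x, (G.neighborSet x).ncard = 3) (ha : 2 ≤ a) (hb : b + 3 ≤ n) (hab : a ≠ b)
    (hopen : a + 1 = n ∧ b = 0 ∨ a + 2 ≤ n ∧ 1 ≤ b)
    (h0 : G.Adj (v 0) (v a)) (h1 : G.Adj (v (n - 1)) (v b)) :
    ∃ D : ChordDiagram n a b, ∀ i < n, ∀ j < n, G.Adj (v i) (v j) ↔ D.graph.Adj i j := by
  have hchord i (hi : i < n) := hv.exists_chord hcubic ha hb hopen h0 h1 hi
  choose! μ hμ_lt hμ_frame hμ_eq hμ_adj using hchord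
  classical
  let D : ChordDiagram n a b :=
    { mate i := if i < n then μ i else i
      two_le_left := ha
      right_add_three_le := hb
      left_ne_right := hab
      closed_or_open := hopen
      mate_mate i := by
        by_cases hi : i < n
        · have := hμ_lt i hi
          have := hμ_adj i hi (μ i) this
          have := hμ_adj (μ i) (hμ_lt i hi) i hi
          simp only [hi, if_true, hμ_lt i hi]
          have := G.adj_comm (v i) (v (μ i))
          have := (frame n a b).adj_comm i (μ i)
          have := hμ_frame i hi
          by_cases h : i = μ i
          · rw [← h, ← h]
          · tauto
        · simp [hi]
      mate_of_le i hi := if_neg hi.not_gt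
      not_frame_adj_mate i := by
        by_cases hi : i < n
        · simpa [hi] using hμ_frame i hi
        · simp [hi]
      mate_eq_self_iff i hi := by simpa [hi] using hμ_eq i hi }
  refine ⟨D, fun i hi j hj => ?_⟩
  rw [hμ_adj i hi j hj, D.graph_adj]
  simp [D, hi]

lemma hasSplitting_of_chordDiagram (hv : IsHamiltonianOrder G n v) {D : ChordDiagram n a b}
    (hD : ∀ i < n, ∀ j < n, G.Adj (v i) (v j) ↔ D.graph.Adj i j)
    (h : HasSplitting D.graph (Set.Iio n)) : HasSplitting G Set.univ := by
  choose index index_lt v_index using hv.exists_eq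
  have index_v {i : ℕ} (hi : i < n) : index (v i) = i :=
    hv.bijOn.injOn (index_lt _) hi (v_index _)
  refine h.comap ⟨⟨index, Function.LeftInverse.injective v_index⟩, fun {x y} => ?_⟩ ?_
  · change D.graph.Adj (index x) (index y) ↔ G.Adj x y
    rw [← hD _ (index_lt x) _ (index_lt y), v_index, v_index]
  · ext i
    exact ⟨fun ⟨x, hx⟩ => hx ▸ index_lt x, fun hi => ⟨v i, index_v hi⟩⟩

lemma hasSplitting_of_adj_zero_last (hv : IsHamiltonianOrder G n v)
    (hcubic : ∀ x, (G.neighborSet x).ncard = 3) (hn : 4 ≤ n) (h : G.Adj (v 0) (v (n - 1))) :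
    HasSplitting G Set.univ := by
  obtain ⟨D, hD⟩ := hv.exists_chordDiagram hcubic (a := n - 1) (b := 0) (by omega) (by omega)
    (by omega) (by omega) h h.symm
  exact hv.hasSplitting_of_chordDiagram hD (D.hasSplitting_of_closed (by omega))

end IsHamiltonianOrder

/-- The involution of `ℕ` that reverses the initial segment `[0, m)`. -/
def flipBelow (m k : ℕ) : ℕ :=
  if k < m then m - 1 - k else k

lemma flipBelow_of_lt {m k : ℕ} (h : k < m) : flipBelow m k = m - 1 - k :=
  if_pos h

lemma flipBelow_of_le {m k : ℕ} (h : m ≤ k) : flipBelow m k = k :=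
  if_neg h.not_gt

lemma comp_flipBelow_of_lt {m k : ℕ} (h : k < m) : (v ∘ flipBelow m) k = v (m - 1 - k) :=
  congrArg v (flipBelow_of_lt h)

lemma comp_flipBelow_of_le {m k : ℕ} (h : m ≤ k) : (v ∘ flipBelow m) k = v k :=
  congrArg v (flipBelow_of_le h)

lemma flipBelow_flipBelow (m k : ℕ) : flipBelow m (flipBelow m k) = k := by
  grind [flipBelow]

namespace IsHamiltonianOrder

lemma comp (hv : IsHamiltonianOrder G n v) {σ : ℕ → ℕ}
    (hσ : Set.BijOn σ (Set.Iio n) (Set.Iio n))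
    (hadj : ∀ i, i + 1 < n → G.Adj (v (σ i)) (v (σ (i + 1)))) : IsHamiltonianOrder G n (v ∘ σ) :=
  ⟨hv.bijOn.comp hσ, hadj⟩

lemma comp_flipBelow (hv : IsHamiltonianOrder G n v) {m : ℕ} (hm : m ≤ n)
    (hadj : m < n → G.Adj (v 0) (v m)) : IsHamiltonianOrder G n (v ∘ flipBelow m) := by
  have hmaps : Set.MapsTo (flipBelow m) (Set.Iio n) (Set.Iio n) := by
    intro k hk
    grind [flipBelow]
  refine hv.comp (Set.InvOn.bijOn ⟨fun k _ => flipBelow_flipBelow m k,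
    fun k _ => flipBelow_flipBelow m k⟩ hmaps hmaps) fun i hi => ?_
  rcases lt_trichotomy (i + 1) m with h | h | h
  · rw [flipBelow_of_lt h, flipBelow_of_lt (by omega),
      show m - 1 - i = m - 1 - (i + 1) + 1 by omega]
    exact (hv.adj_succ _ (by omega)).symm
  · rw [flipBelow_of_le h.ge, flipBelow_of_lt (by omega), show m - 1 - i = 0 by omega, h]
    exact hadj (by omega)
  · rw [flipBelow_of_le h.le, flipBelow_of_le (by omega)]
    exact hv.adj_succ i hi

lemma reverse (hv : IsHamiltonianOrder G n v) : IsHamiltonianOrder G n (v ∘ flipBelow n) :=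
  hv.comp_flipBelow le_rfl fun h => (lt_irrefl n h).elim

lemma exists_reroute (hv : IsHamiltonianOrder G n v) {Γ : SimpleGraph ℕ} {u m : ℕ} (hm : m < n)
    (hΓ : ∀ i < n, ∀ j < n, Γ.Adj i j → G.Adj (v i) (v j))
    (h : HasSpanningPath Γ (Set.Iic m) u m) :
    ∃ w, IsHamiltonianOrder G n w ∧ w 0 = v u ∧ ∀ i, m < i → w i = v i := by
  obtain ⟨p, hp, hsupp⟩ := h
  have hlength : p.length = m := by
    have hcard := List.toFinset_card_of_nodup hp.support_nodup
    have hIic : p.support.toFinset = Finset.Iic m := by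
      ext i
      simp [hsupp]
    simp only [hIic, Nat.card_Iic, Walk.length_support] at hcard
    omega
  have getVert_le i : p.getVert i ≤ m := (hsupp _).1 (p.getVert_mem_support i)
  let σ i := if i ≤ m then p.getVert i else i
  have hσ : Set.BijOn σ (Set.Iio n) (Set.Iio n) := by
    refine ⟨fun i hi => ?_, fun i _ j _ hij => ?_, fun i hi => ?_⟩
    · grind
    · have hinj := hp.getVert_injOn (x₁ := i) (x₂ := j)
      grind
    · by_cases him : i ≤ m
      · obtain ⟨k, hk, hkm⟩ := Walk.mem_support_iff_exists_getVert.1 ((hsupp i).2 him)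
        exact ⟨k, by grind, by grind⟩
      · exact ⟨i, hi, if_neg him⟩
  refine ⟨v ∘ σ, hv.comp hσ fun i hi => ?_, by simp [σ], fun i hi => by simp [σ, hi.not_ge]⟩
  rcases lt_trichotomy i m with him | rfl | him
  · simp only [σ, him.le, Nat.succ_le_of_lt him, if_true]
    exact hΓ _ ((getVert_le _).trans_lt hm) _ ((getVert_le _).trans_lt hm)
      (p.adj_getVert_succ (by omega))
  · have hlast := hlength ▸ p.getVert_length
    simpa [σ, hlast] using hv.adj_succ i hi
  · simpa [σ, him.not_ge, show ¬ i + 1 ≤ m by omega] using hv.adj_succ i hi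

end IsHamiltonianOrder

/-- Some edge of `G` joins two nonconsecutive vertices of the segment `v p, …, v (q - 1)`. -/
def HasJumpIn (G : SimpleGraph V) (v : ℕ → V) (p q : ℕ) : Prop :=
  ∃ i j, p ≤ i ∧ i + 1 < j ∧ j < q ∧ G.Adj (v i) (v j)

lemma HasJumpIn.comp_flipBelow {m p q : ℕ} (hpq : q ≤ m) (h : HasJumpIn G v p q) :
    HasJumpIn G (v ∘ flipBelow m) (m - q) (m - p) := by
  obtain ⟨i, j, hpi, hij, hjq, hadj⟩ := h
  refine ⟨flipBelow m j, flipBelow m i, ?_⟩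
  simp only [Function.comp_apply, flipBelow_flipBelow]
  rw [flipBelow_of_lt (by omega), flipBelow_of_lt (by omega)]
  exact ⟨by omega, by omega, by omega, hadj.symm⟩

lemma hasJumpIn_comp_flipBelow_iff_of_le {m p q : ℕ} (hpq : p ≤ q) (hqm : q ≤ m) :
    HasJumpIn G (v ∘ flipBelow m) (m - q) (m - p) ↔ HasJumpIn G v p q := by
  refine ⟨fun h => ?_, .comp_flipBelow hqm⟩
  have hv : (v ∘ flipBelow m) ∘ flipBelow m = v := by
    ext k
    simp [flipBelow_flipBelow]
  have := h.comp_flipBelow (m.sub_le p)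
  rwa [hv, show m - (m - p) = p by omega, show m - (m - q) = q by omega] at this

lemma hasJumpIn_comp_flipBelow_iff_of_ge {m p q : ℕ} (hmp : m ≤ p) :
    HasJumpIn G (v ∘ flipBelow m) p q ↔ HasJumpIn G v p q := by
  refine exists₂_congr fun i j => and_congr_right fun hi => and_congr_right fun hij => ?_
  rw [comp_flipBelow_of_le (by omega), comp_flipBelow_of_le (by omega)]

lemma ChordDiagram.hasChordIn_iff_hasJumpIn {D : ChordDiagram n a b}
    (hD : ∀ i < n, ∀ j < n, G.Adj (v i) (v j) ↔ D.graph.Adj i j) {p q : ℕ} (hq : q ≤ n)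
    (hframe : ∀ i j, p ≤ i → i + 1 < j → j < q → ¬ (frame n a b).Adj i j) :
    D.HasChordIn p q ↔ HasJumpIn G v p q := by
  constructor
  · rintro ⟨i, hpi, hi, hq⟩
    have := D.not_frame_adj_mate i
    have hne : D.mate i ≠ i + 1 := by
      intro h
      simp only [frame_adj] at this
      omega
    exact ⟨i, D.mate i, hpi, by omega, hq, (hD _ (by omega) _ (by omega)).2 (D.adj_mate hi.ne')⟩
  · rintro ⟨i, j, hpi, hij, hjq, hadj⟩
    have hor := D.graph_adj.1 ((hD _ (by omega) _ (by omega)).1 hadj)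
    obtain ⟨rfl, -⟩ := hor.resolve_left (hframe i j hpi hij hjq)
    exact ⟨i, hpi, by omega, hjq⟩

namespace IsHamiltonianOrder

lemma hasSplitting_of_low_iff_high (hv : IsHamiltonianOrder G n v)
    (hcubic : ∀ x, (G.neighborSet x).ncard = 3) (hb : 1 ≤ b) (hba : b + 2 ≤ a) (ha : a + 2 ≤ n)
    (h0 : G.Adj (v 0) (v a)) (h1 : G.Adj (v (n - 1)) (v b))
    (hiff : HasJumpIn G v 0 b ↔ HasJumpIn G v (a + 1) n) : HasSplitting G Set.univ := by
  obtain ⟨D, hD⟩ := hv.exists_chordDiagram hcubic (by omega) (by omega) (by omega) (by omega) h0 h1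
  have hlow : D.HasChordIn 0 b ↔ HasJumpIn G v 0 b :=
    D.hasChordIn_iff_hasJumpIn hD (by omega) fun i j _ _ _ => by rw [frame_adj]; omega
  have hhigh : D.HasChordIn (a + 1) n ↔ HasJumpIn G v (a + 1) n :=
    D.hasChordIn_iff_hasJumpIn hD le_rfl fun i j _ _ _ => by rw [frame_adj]; omega
  apply hv.hasSplitting_of_chordDiagram hD
  by_cases h : D.HasChordIn 0 b
  · exact ChordDiagram.hasSplitting_of_hasChordIn hb (by omega) h (by tauto)
  · exact ChordDiagram.hasSplitting_of_not_hasChordIn hb hba h (by tauto)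

lemma hasSplitting_of_adj_succ (hv : IsHamiltonianOrder G n v)
    (hcubic : ∀ x, (G.neighborSet x).ncard = 3) (hb : 1 ≤ b) (hbn : b + 3 ≤ n)
    (h0 : G.Adj (v 0) (v (b + 1))) (h1 : G.Adj (v (n - 1)) (v b)) : HasSplitting G Set.univ := by
  have hw := hv.comp_flipBelow (m := b + 1) (by omega) fun _ => h0
  refine hw.hasSplitting_of_adj_zero_last hcubic (by omega) ?_
  rw [comp_flipBelow_of_lt (by omega), comp_flipBelow_of_le (by omega)]
  exact h1.symm

lemma hasSplitting_of_mid_iff_high (hv : IsHamiltonianOrder G n v)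
    (hcubic : ∀ x, (G.neighborSet x).ncard = 3) (hb : 1 ≤ b) (hba : b + 2 ≤ a) (ha : a + 2 ≤ n)
    (h0 : G.Adj (v 0) (v a)) (h1 : G.Adj (v (n - 1)) (v b))
    (hiff : HasJumpIn G v (b + 1) a ↔ HasJumpIn G v (a + 1) n) : HasSplitting G Set.univ := by
  have hw := hv.comp_flipBelow (m := a) (by omega) fun _ => h0
  refine hw.hasSplitting_of_low_iff_high hcubic (a := a) (b := a - (b + 1)) (by omega) (by omega) ha
    ?_ ?_ ?_
  · have hadj := hv.adj_succ (a - 1) (by omega)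
    rw [show a - 1 + 1 = a by omega] at hadj
    rwa [comp_flipBelow_of_lt (by omega), comp_flipBelow_of_le le_rfl, Nat.sub_zero]
  · rwa [comp_flipBelow_of_le (by omega), comp_flipBelow_of_lt (by omega),
      show a - 1 - (a - (b + 1)) = b by omega]
  · have hmid := hasJumpIn_comp_flipBelow_iff_of_le (G := G) (v := v) (m := a) (p := b + 1) (q := a)
      (by omega) le_rfl
    rw [hasJumpIn_comp_flipBelow_iff_of_ge (p := a + 1) (by omega), ← hiff, ← hmid, Nat.sub_self]

/-- Two of the three segments cut out by `b` and `a` agree on whether they contain a jump; flipping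
and reversing the order permutes the segments. -/
lemma hasSplitting_of_theta (hv : IsHamiltonianOrder G n v)
    (hcubic : ∀ x, (G.neighborSet x).ncard = 3) (hb : 1 ≤ b) (hba : b < a) (ha : a + 2 ≤ n)
    (h0 : G.Adj (v 0) (v a)) (h1 : G.Adj (v (n - 1)) (v b)) : HasSplitting G Set.univ := by
  obtain rfl | hba := (Nat.succ_le_of_lt hba).eq_or_lt
  · exact hv.hasSplitting_of_adj_succ hcubic hb (by omega) h0 h1
  by_cases hlow : HasJumpIn G v 0 b ↔ HasJumpIn G v (a + 1) n
  · exact hv.hasSplitting_of_low_iff_high hcubic hb hba ha h0 h1 hlow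
  by_cases hmid : HasJumpIn G v (b + 1) a ↔ HasJumpIn G v (a + 1) n
  · exact hv.hasSplitting_of_mid_iff_high hcubic hb hba ha h0 h1 hmid
  have hiff : HasJumpIn G v (b + 1) a ↔ HasJumpIn G v 0 b := by tauto
  refine hv.reverse.hasSplitting_of_mid_iff_high hcubic (a := n - (b + 1)) (b := n - (a + 1))
    (by omega) (by omega) (by omega) ?_ ?_ ?_
  · rw [comp_flipBelow_of_lt (by omega), comp_flipBelow_of_lt (by omega),
      show n - 1 - (n - (b + 1)) = b by omega]
    exact h1
  · rw [comp_flipBelow_of_lt (by omega), comp_flipBelow_of_lt (by omega),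
      show n - 1 - (n - (a + 1)) = a by omega, Nat.sub_self]
    exact h0
  · have hmid := hasJumpIn_comp_flipBelow_iff_of_le (G := G) (v := v) (m := n) (p := b + 1)
      (q := a) (by omega) (by omega)
    have hlow := hasJumpIn_comp_flipBelow_iff_of_le (G := G) (v := v) (m := n) (p := 0) (q := b)
      (by omega) (by omega)
    rw [← hmid, ← hlow, Nat.sub_zero] at hiff
    rwa [show n - (a + 1) + 1 = n - a by omega, show n - (b + 1) + 1 = n - b by omega]

/-- The splitting lemma for dumbbells either applies directly, or reroutes the order so that it
starts at the vertex `v u`, whose chord turns the dumbbell into a theta graph or a cycle. -/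
lemma hasSplitting_of_dumbbell (hv : IsHamiltonianOrder G n v)
    (hcubic : ∀ x, (G.neighborSet x).ncard = 3) {m : ℕ} (hm : 2 ≤ m) (hma : m < a) (hab : a < b)
    (hb : b + 3 ≤ n) (hadj : G.Adj (v 0) (v m)) (h0 : G.Adj (v 0) (v a))
    (h1 : G.Adj (v (n - 1)) (v b)) : HasSplitting G Set.univ := by
  obtain ⟨D, hD⟩ := hv.exists_chordDiagram hcubic (by omega) hb hab.ne (by omega) h0 h1
  have hmate : D.mate 0 = m := by
    have hm := ChordDiagram.adj_zero_iff.1 ((hD 0 (by omega) m (by omega)).1 hadj)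
    omega
  obtain h | ⟨u, hua, hbu, hpath⟩ := D.hasSplitting_or_hasSpanningPath hab (hmate.trans_lt hma)
  · exact hv.hasSplitting_of_chordDiagram hD h
  obtain ⟨w, hw, hw0, hwv⟩ := hv.exists_reroute (by omega) (fun i hi j hj => (hD i hi j hj).2) hpath
  have hu := D.mate_lt (i := u) (by omega)
  have hadj : G.Adj (w 0) (w (D.mate u)) := by
    rw [hw0, hwv _ (by omega), hD _ (by omega) _ hu]
    exact D.adj_mate (by omega)
  obtain hlast | hlast : D.mate u = n - 1 ∨ D.mate u + 2 ≤ n := by omega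
  · exact hw.hasSplitting_of_adj_zero_last hcubic (by omega) (hlast ▸ hadj)
  · refine hw.hasSplitting_of_theta hcubic (by omega) hbu hlast hadj ?_
    rwa [hwv _ (by omega), hwv _ (by omega)]

lemma exists_adj_zero (hv : IsHamiltonianOrder G n v)
    (hcubic : ∀ x, (G.neighborSet x).ncard = 3) (hn : 2 ≤ n) (h : ¬ G.Adj (v 0) (v (n - 1))) :
    ∃ m a, 2 ≤ m ∧ m < a ∧ a + 2 ≤ n ∧ G.Adj (v 0) (v m) ∧ G.Adj (v 0) (v a) := by
  obtain ⟨p, q, r, hp, hq, hr, hpq, hpr, hqr, hadj⟩ := hv.exists_forall_adj_iff hcubic 0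
  have h0p := (hadj p hp).2 (by simp)
  have h0q := (hadj q hq).2 (by simp)
  have h0r := (hadj r hr).2 (by simp)
  have hne {k : ℕ} (hk : G.Adj (v 0) (v k)) : k ≠ 0 ∧ k ≠ n - 1 :=
    ⟨by rintro rfl; exact G.irrefl hk, by rintro rfl; exact h hk⟩
  have of_ne {i j : ℕ} (hi : i < n) (hj : j < n) (hij : i ≠ j) (hi1 : 1 ≠ i) (hj1 : 1 ≠ j)
      (h0i : G.Adj (v 0) (v i)) (h0j : G.Adj (v 0) (v j)) :
      ∃ m a, 2 ≤ m ∧ m < a ∧ a + 2 ≤ n ∧ G.Adj (v 0) (v m) ∧ G.Adj (v 0) (v a) := by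
    have := hne h0i
    have := hne h0j
    rcases hij.lt_or_gt with hlt | hlt
    · exact ⟨i, j, by omega, hlt, by omega, h0i, h0j⟩
    · exact ⟨j, i, by omega, hlt, by omega, h0j, h0i⟩
  obtain rfl | rfl | rfl := (hadj 1 (by omega)).1 (hv.adj_succ 0 (by omega))
  · exact of_ne hq hr hqr hpq hpr h0q h0r
  · exact of_ne hp hr hpr hpq.symm hqr h0p h0r
  · exact of_ne hp hq hpq hpr.symm hqr.symm h0p h0q

lemma exists_adj_last (hv : IsHamiltonianOrder G n v)
    (hcubic : ∀ x, (G.neighborSet x).ncard = 3) (hn : 2 ≤ n) (h : ¬ G.Adj (v 0) (v (n - 1))) :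
    ∃ b, 1 ≤ b ∧ b + 3 ≤ n ∧ G.Adj (v (n - 1)) (v b) := by
  obtain ⟨m, a, hm, hma, ha, hadj, -⟩ := hv.reverse.exists_adj_zero hcubic hn <| by
    rwa [comp_flipBelow_of_lt (by omega), comp_flipBelow_of_lt (by omega), Nat.sub_self,
      Nat.sub_zero, adj_comm]
  rw [comp_flipBelow_of_lt (by omega), comp_flipBelow_of_lt (by omega), Nat.sub_zero] at hadj
  exact ⟨n - 1 - m, by omega, by omega, hadj⟩

lemma hasSplitting_univ (hv : IsHamiltonianOrder G n v)
    (hcubic : ∀ x, (G.neighborSet x).ncard = 3) (hn : 4 ≤ n) : HasSplitting G Set.univ := by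
  by_cases h : G.Adj (v 0) (v (n - 1))
  · exact hv.hasSplitting_of_adj_zero_last hcubic hn h
  obtain ⟨m, a, hm, hma, ha, h0m, h0a⟩ := hv.exists_adj_zero hcubic (by omega) h
  obtain ⟨b, hb, hbn, h1⟩ := hv.exists_adj_last hcubic (by omega) h
  rcases lt_trichotomy a b with hab | rfl | hba
  · exact hv.hasSplitting_of_dumbbell hcubic hm hma hab hbn h0m h0a h1
  · obtain ⟨p, q, r, -, -, -, -, -, -, hadj⟩ := hv.exists_forall_adj_iff hcubic a
    have hzero := (hadj 0 (by omega)).1 h0a.symm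
    have hlast := (hadj (n - 1) (by omega)).1 h1.symm
    have hnext := (hadj (a + 1) (by omega)).1 (hv.adj_succ a (by omega))
    have hprev := hv.adj_succ (a - 1) (by omega)
    rw [show a - 1 + 1 = a by omega] at hprev
    have hprev := (hadj (a - 1) (by omega)).1 hprev.symm
    omega
  · exact hv.hasSplitting_of_theta hcubic hb hba ha h0a h1

end IsHamiltonianOrder

lemma isHamiltonianOrder_getVert [Fintype V] [DecidableEq V] {x y : V} (p : G.Walk x y)
    (hp : p.IsHamiltonian) : IsHamiltonianOrder G (Fintype.card V) p.getVert := by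
  have hlength := hp.length_eq
  refine ⟨⟨fun _ _ => trivial, fun i hi j hj => ?_, fun z _ => ?_⟩, fun i hi => ?_⟩
  · rw [Set.mem_Iio] at hi hj
    exact hp.isPath.getVert_injOn (by simp; omega) (by simp; omega)
  · obtain ⟨i, hi, hin⟩ := Walk.mem_support_iff_exists_getVert.1 (hp.mem_support z)
    have := Fintype.card_pos_iff.2 ⟨z⟩
    exact ⟨i, by rw [Set.mem_Iio]; omega, hi⟩
  · exact p.adj_getVert_succ (by omega)

end HamiltonianOrders

end HoffmannOstenhof

/-- Hoffmann-Ostenhof's conjecture holds for traceable cubic graphs: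
if `G` is a connected cubic graph containing a Hamiltonian path, then the edge
set of `G` can be partitioned into the edge set of a spanning tree of `G`,
the edge set of a matching, and the edge set of a disjoint union of cycles. -/
theorem hoffmann_ostenhof_traceable
    {V : Type*} [Fintype V] [DecidableEq V] (G : SimpleGraph V) [DecidableRel G.Adj]
    (hcubic : ∀ v : V, G.degree v = 3)
    (hconn : G.Connected)
    (htrace : ∃ (u v : V) (p : G.Walk u v), p.IsPath ∧ p.IsHamiltonian) :
    ∃ (T M C : Set (Sym2 V)),
      -- the three parts partition the edge set of `G`
      T ∪ M ∪ C = G.edgeSet ∧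
      Disjoint T M ∧ Disjoint T C ∧ Disjoint M C ∧
      -- `T` is the edge set of a spanning tree of `G`
      (SimpleGraph.fromEdgeSet T).IsTree ∧
      -- `M` is a matching: distinct edges of `M` share no vertex
      M.Pairwise (fun e f => ∀ v : V, v ∈ e → v ∉ f) ∧
      -- `C` is the edge set of a family of vertex-disjoint cycles of `G`
      (∃ (ι : Type) (_ : Fintype ι) (x : ι → V)
          (w : ∀ i : ι, G.Walk (x i) (x i)),
        (∀ i, (w i).IsCycle) ∧
        (Pairwise fun i j => ∀ v : V, v ∈ (w i).support → v ∉ (w j).support) ∧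
        C = ⋃ i, {e : Sym2 V | e ∈ (w i).edges}) := by
  obtain ⟨u, v, p, -, hp⟩ := htrace
  have hn : 3 < Fintype.card V := (hcubic u).symm.trans_lt (G.degree_lt_card_verts u)
  have hcubic' x : (G.neighborSet x).ncard = 3 := by
    rw [Set.ncard_eq_toFinset_card', Set.toFinset_card, G.card_neighborSet_eq_degree, hcubic]
  obtain ⟨T, M, C, h⟩ := ((HoffmannOstenhof.isHamiltonianOrder_getVert p hp).hasSplitting_univ
    hcubic' hn).exists_isDecomposition hcubic'
  refine ⟨T.edgeSet, M.edgeSet, C.edgeSet, ?_,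
    SimpleGraph.disjoint_edgeSet.2 h.disjoint_tree_matching,
    SimpleGraph.disjoint_edgeSet.2 h.disjoint_tree_cycles,
    SimpleGraph.disjoint_edgeSet.2 h.disjoint_matching_cycles, ?_,
    h.isMatchingGraph.pairwise_edgeSet, ?_⟩
  · rw [← SimpleGraph.edgeSet_sup, ← SimpleGraph.edgeSet_sup, h.sup_eq]
  · rw [SimpleGraph.fromEdgeSet_edgeSet]
    exact h.isTree
  · exact HoffmannOstenhof.exists_disjoint_cycles_of_isCycles
      (le_sup_right.trans_eq h.sup_eq) h.isCycles
end
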